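/- arXiv:2207.11424 — 2 statements merged into one kernel-verified Lean document; each statement's English description precedes it below -/
import Mathlib

section
/- Let N ≥ 3, α ∈ (0, N), p > (N+α)/(N−2), and let {u_n} ⊂ D^{1,2}(G) be a maximizing sequence: ‖u_n‖_{D^{1,2}} = 1 and ∑_{x∈G} (R_α ∗ |u_n|^p)(x)|u_n(x)|^p → K as n → ∞. Then liminf_{n→∞} sup_{x∈G} ∑_{y∼x} |u_n(y)−u_n(x)| > 0. -/
open Filter Topology

noncomputable section

namespace Choquard

variable {G : Type*}

/-- The word metric on the Cayley graph of `(G, S)`: the least `k` such that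
`y = x * s₁ * ⋯ * s_k` with each `sᵢ ∈ S`. -/
def wordDist [Group G] (S : Finset G) (x y : G) : ℕ :=
  sInf {k : ℕ | ∃ l : List G, (∀ s ∈ l, s ∈ S) ∧ l.length = k ∧ y = x * l.prod}

/-- Convolution against a kernel: `(R ∗ f)(x) = ∑_{y ∈ G} R(x,y) f(y)`. -/
def conv (R : G → G → ℝ) (f : G → ℝ) (x : G) : ℝ := ∑' y, R x y * f y

/-- The `ℓ^q(G)` norm of `u`. -/
def lpNorm (q : ℝ) (u : G → ℝ) : ℝ := (∑' x, |u x| ^ q) ^ (1 / q)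

/-- `u ∈ ℓ^q(G)`. -/
def Memlp (q : ℝ) (u : G → ℝ) : Prop := Summable fun x : G => |u x| ^ q

/-- `|∇u(x)|_p^p = ∑_{y ∼ x} |u(y) − u(x)|^p`, where `y ∼ x` iff `y = x * s`, `s ∈ S`. -/
def gradP [Group G] (S : Finset G) (p : ℝ) (u : G → ℝ) (x : G) : ℝ :=
  ∑ s ∈ S, |u (x * s) - u x| ^ p

/-- The `D^{1,p}` norm `(∑_x ∑_{y ∼ x} |u(y) − u(x)|^p)^{1/p}`. -/
def D1Norm [Group G] (S : Finset G) (p : ℝ) (u : G → ℝ) : ℝ :=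
  (∑' x, gradP S p u x) ^ (1 / p)

/-- `u ∈ D^{1,p}(G) = {u ∈ ℓ^{Np/(N−p)}(G) : ‖u‖_{D^{1,p}} < ∞}`. -/
def MemD1p [Group G] (S : Finset G) (N : ℕ) (p : ℝ) (u : G → ℝ) : Prop :=
  Memlp ((N : ℝ) * p / ((N : ℝ) - p)) u ∧ Summable (gradP S p u)

/-- `|∇u(x)|₂² = ∑_{y ∼ x} (u(y) − u(x))²`. -/
def gradSq [Group G] (S : Finset G) (u : G → ℝ) (x : G) : ℝ :=
  ∑ s ∈ S, (u (x * s) - u x) ^ 2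

/-- The `D^{1,2}` norm. -/
def D12Norm [Group G] (S : Finset G) (u : G → ℝ) : ℝ :=
  (∑' x, gradSq S u x) ^ ((1 : ℝ) / 2)

/-- `u ∈ D^{1,2}(G) = {u ∈ ℓ^{2N/(N−2)}(G) : ‖u‖_{D^{1,2}} < ∞}`. -/
def MemD12 [Group G] (S : Finset G) (N : ℕ) (u : G → ℝ) : Prop :=
  Memlp (2 * (N : ℝ) / ((N : ℝ) - 2)) u ∧ Summable (gradSq S u)

/-- The graph Laplacian `Δu(x) = ∑_{y ∼ x} (u(y) − u(x))`. -/
def lap [Group G] (S : Finset G) (u : G → ℝ) (x : G) : ℝ :=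
  ∑ s ∈ S, (u (x * s) - u x)

/-- `u ∈ D^{2,2}(G) = {u ∈ ℓ^{2N/(N−4)}(G) : ‖Δu‖_{ℓ²} < ∞}`. -/
def MemD22 [Group G] (S : Finset G) (N : ℕ) (u : G → ℝ) : Prop :=
  Memlp (2 * (N : ℝ) / ((N : ℝ) - 4)) u ∧ Summable fun x => (lap S u x) ^ 2

/-- `u ∈ D^{2,p}(G) = {u ∈ ℓ^{Np/(N−2p)}(G) : ‖Δu‖_{ℓ^p} < ∞}`. -/
def MemD2p [Group G] (S : Finset G) (N : ℕ) (p : ℝ) (u : G → ℝ) : Prop :=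
  Memlp ((N : ℝ) * p / ((N : ℝ) - 2 * p)) u ∧ Summable fun x => |lap S u x| ^ p

/-- The nonlocal energy `∑_{x ∈ G} (R_α ∗ |u|^p)(x) |u(x)|^p`. -/
def energy (R : G → G → ℝ) (p : ℝ) (u : G → ℝ) : ℝ :=
  ∑' x, conv R (fun y => |u y| ^ p) x * |u x| ^ p

/-- The optimal constant `K` of the Sobolev-type inequality. -/
def bestK [Group G] (S : Finset G) (N : ℕ) (R : G → G → ℝ) (p : ℝ) : ℝ :=
  sSup {t : ℝ | ∃ u : G → ℝ, MemD12 S N u ∧ D12Norm S u = 1 ∧ t = energy R p u}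

/-- The discrete `p`-Laplacian. -/
def pLap [Group G] (S : Finset G) (p : ℝ) (u : G → ℝ) (x : G) : ℝ :=
  ∑ s ∈ S, |u (x * s) - u x| ^ (p - 2) * (u (x * s) - u x)

/-- The cutoff `Ψ_r`, the indicator of `{x : d(x,e) ≥ r + 1}`. -/
def cutoff [Group G] (S : Finset G) (r : ℕ) (x : G) : ℝ :=
  if r + 1 ≤ wordDist S 1 x then 1 else 0

/-- Comparison with a (dyadic) family of summable majorants. -/
lemma dyadic_bound {X : Type*} (g : X → ℝ) (w : ℕ → X → ℝ) (W : ℕ → ℝ)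
    (hg : ∀ x, 0 ≤ g x) (hw : ∀ j x, 0 ≤ w j x)
    (hex : ∀ x, ∃ j, g x ≤ w j x) (hsum : ∀ j, Summable (w j))
    (hle : ∀ j, ∑' x, w j x ≤ W j) (hW : Summable W) :
    Summable g ∧ ∑' x, g x ≤ ∑' j, W j := by
  have hW0 : ∀ j, 0 ≤ W j := fun j => (tsum_nonneg (hw j)).trans (hle j)
  choose J hJ using hex
  have key : ∀ s : Finset X, ∑ x ∈ s, g x ≤ ∑' j, W j := by
    intro s
    calc ∑ x ∈ s, g x ≤ ∑ x ∈ s, ∑ j ∈ Finset.range (s.sup J + 1), w j x := by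
          refine Finset.sum_le_sum fun x hx => (hJ x).trans ?_
          refine Finset.single_le_sum (f := fun j => w j x) (fun j _ => hw j x) ?_
          have : J x ≤ s.sup J := Finset.le_sup hx
          simp; omega
      _ = ∑ j ∈ Finset.range (s.sup J + 1), ∑ x ∈ s, w j x := Finset.sum_comm
      _ ≤ ∑ j ∈ Finset.range (s.sup J + 1), W j := by
          refine Finset.sum_le_sum fun j _ => ?_
          exact ((hsum j).sum_le_tsum s (fun x _ => hw j x)).trans (hle j)
      _ ≤ ∑' j, W j := hW.sum_le_tsum _ (fun j _ => hW0 j)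
  refine ⟨summable_of_sum_le hg key, ?_⟩
  exact Real.tsum_le_of_sum_le hg key

lemma exists_word [Group G] (S : Finset G) (hS_gen : Subgroup.closure (S : Set G) = ⊤)
    (hS_sym : ∀ s ∈ S, s⁻¹ ∈ S) (g : G) :
    ∃ l : List G, (∀ s ∈ l, s ∈ S) ∧ l.length = wordDist S 1 g ∧ g = l.prod := by
  have hne : {k : ℕ | ∃ l : List G, (∀ s ∈ l, s ∈ S) ∧ l.length = k ∧ g = 1 * l.prod}.Nonempty := by
    have hg : g ∈ Subgroup.closure (S : Set G) := by rw [hS_gen]; trivial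
    rw [← Subgroup.mem_toSubmonoid, Subgroup.closure_toSubmonoid] at hg
    obtain ⟨l, hl, hlg⟩ := Submonoid.exists_list_of_mem_closure hg
    refine ⟨l.length, l, ?_, rfl, by simp [hlg]⟩
    intro s hs
    rcases hl s hs with h | h
    · exact h
    · simpa using hS_sym _ (Finset.mem_coe.mp (Set.mem_inv.mp h))
  obtain ⟨l, h1, h2, h3⟩ := Nat.sInf_mem hne
  exact ⟨l, h1, h2, by simpa using h3⟩

lemma wordDist_translate [Group G] (S : Finset G) (x y : G) :
    wordDist S x y = wordDist S 1 (x⁻¹ * y) := by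
  unfold wordDist
  congr 1
  ext k
  simp [inv_mul_eq_iff_eq_mul]

lemma exists_ball [Group G] (S : Finset G) (N : ℕ) (C₁ C₂ : ℝ) (hC₁ : 0 < C₁)
    (hgrowth : ∀ n : ℕ, 1 ≤ n →
      C₁ * (n : ℝ) ^ N ≤ (Nat.card {x : G // wordDist S 1 x ≤ n} : ℝ) ∧
      (Nat.card {x : G // wordDist S 1 x ≤ n} : ℝ) ≤ C₂ * (n : ℝ) ^ N) (n : ℕ) (hn : 1 ≤ n) :
    ∃ B : Finset G, (∀ g, g ∈ B ↔ wordDist S 1 g ≤ n) ∧ C₁ * (n : ℝ) ^ N ≤ (B.card : ℝ) ∧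
      (B.card : ℝ) ≤ C₂ * (n : ℝ) ^ N := by
  obtain ⟨h1, h2⟩ := hgrowth n hn
  have hpos : 0 < C₁ * (n : ℝ) ^ N := by positivity
  have hfin : Finite {x : G // wordDist S 1 x ≤ n} := by
    by_contra h
    rw [not_finite_iff_infinite] at h
    rw [Nat.card_eq_zero_of_infinite] at h1
    simp at h1; linarith
  have hfin' : {x : G | wordDist S 1 x ≤ n}.Finite := hfin
  have hc : Nat.card {x : G // wordDist S 1 x ≤ n} = hfin'.toFinset.card := by
    rw [← Set.ncard_eq_toFinset_card _ hfin']; rfl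
  refine ⟨hfin'.toFinset, by simp, ?_, ?_⟩
  · rw [← hc]; exact h1
  · rw [← hc]; exact h2

/-- Summability of a power of the word length. -/
lemma summable_dist [Group G] (S : Finset G) (N : ℕ) (C₁ C₂ : ℝ) (hC₁ : 0 < C₁)
    (hgrowth : ∀ n : ℕ, 1 ≤ n →
      C₁ * (n : ℝ) ^ N ≤ (Nat.card {x : G // wordDist S 1 x ≤ n} : ℝ) ∧
      (Nat.card {x : G // wordDist S 1 x ≤ n} : ℝ) ≤ C₂ * (n : ℝ) ^ N)
    (t : ℝ) (ht : (N : ℝ) < t) :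
    Summable fun z : G => (wordDist S 1 z : ℝ) ^ (-t) := by
  have hb : ∀ j : ℕ, ∃ B : Finset G, (∀ g, g ∈ B ↔ wordDist S 1 g ≤ 2 ^ (j + 1)) ∧
      (B.card : ℝ) ≤ C₂ * ((2 ^ (j + 1) : ℕ) : ℝ) ^ N := by
    intro j
    obtain ⟨B, h1, _, h3⟩ := exists_ball S N C₁ C₂ hC₁ hgrowth (2 ^ (j + 1)) Nat.one_le_two_pow
    exact ⟨B, h1, h3⟩
  choose B hB hBc using hb
  have ht0 : 0 < t := lt_of_le_of_lt (Nat.cast_nonneg N) ht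
  refine (dyadic_bound (fun z : G => (wordDist S 1 z : ℝ) ^ (-t))
    (fun j => (B j : Set G).indicator (fun _ => ((2 : ℝ) ^ (-t)) ^ j))
    (fun j => C₂ * 2 ^ N * (2 ^ (N : ℝ) * 2 ^ (-t)) ^ j) ?_ ?_ ?_ ?_ ?_ ?_).1
  · intro z; positivity
  · intro j z
    exact Set.indicator_nonneg (fun _ _ => by positivity) z
  · intro z
    by_cases hz : wordDist S 1 z = 0
    · refine ⟨0, ?_⟩
      have : z ∈ (B 0 : Set G) := by
        simp [hB, hz]
      rw [Set.indicator_of_mem this, hz]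
      simp [Real.zero_rpow (neg_ne_zero.mpr ht0.ne')]
    · refine ⟨Nat.log 2 (wordDist S 1 z), ?_⟩
      have hlt := Nat.lt_pow_succ_log_self (b := 2) (by norm_num) (wordDist S 1 z)
      have hge := Nat.pow_log_le_self 2 hz
      have : z ∈ (B (Nat.log 2 (wordDist S 1 z)) : Set G) := by
        simp only [Finset.mem_coe, hB]; exact hlt.le
      rw [Set.indicator_of_mem this, ← Real.rpow_natCast, ← Real.rpow_mul (by norm_num),
        mul_comm (-t), Real.rpow_mul (by norm_num), Real.rpow_natCast]
      refine Real.rpow_le_rpow_of_nonpos (by positivity) ?_ (by linarith)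
      exact_mod_cast hge
  · intro j
    refine summable_of_hasFiniteSupport ((B j).finite_toSet.subset ?_)
    exact Set.support_indicator_subset
  · intro j
    rw [tsum_eq_sum (s := B j) (fun b hb => Set.indicator_of_notMem (by simpa using hb) _)]
    rw [Finset.sum_congr rfl (fun x hx => Set.indicator_of_mem (by simpa using hx) _)]
    rw [Finset.sum_const, nsmul_eq_mul, mul_pow, Real.rpow_natCast]
    calc ((B j).card : ℝ) * ((2 : ℝ) ^ (-t)) ^ j
        ≤ (C₂ * ((2 ^ (j + 1) : ℕ) : ℝ) ^ N) * ((2 : ℝ) ^ (-t)) ^ j := by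
          gcongr; exact hBc j
      _ = _ := by push_cast; ring
  · refine Summable.mul_left _ (summable_geometric_of_lt_one (by positivity) ?_)
    rw [← Real.rpow_add (by norm_num)]
    exact Real.rpow_lt_one_of_one_lt_of_neg (by norm_num) (by linarith)

/-- Non-endpoint Young inequality via weighted AM-GM. -/
lemma young_bound [Group G] (R : G → G → ℝ) (hR : ∀ x y, 0 ≤ R x y) (t : ℝ)
    (ht : 1 / 2 < t) (ht1 : t < 1) (h k : G → ℝ) (hh : ∀ x, 0 ≤ h x) (hk : ∀ x, 0 ≤ k x)
    (hhs : Summable h) (hks : Summable k)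
    (hRk : ∀ x y, R x y ≤ (k (x⁻¹ * y)) ^ (2 * (1 - t))) :
    Summable (fun z : G × G => R z.1 z.2 * (h z.2) ^ t * (h z.1) ^ t) ∧
    ∑' z : G × G, R z.1 z.2 * (h z.2) ^ t * (h z.1) ^ t ≤
      (∑' x, h x) ^ 2 + 2 * (∑' x, h x) * (∑' x, k x) := by
  have hpt : ∀ z : G × G, R z.1 z.2 * (h z.2) ^ t * (h z.1) ^ t ≤
      h z.1 * h z.2 + h z.1 * k (z.1⁻¹ * z.2) + h z.2 * k (z.1⁻¹ * z.2) := by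
    rintro ⟨x, y⟩
    have h1 := hh x
    have h2 := hh y
    have h3 := hk (x⁻¹ * y)
    have := Real.geom_mean_le_arith_mean3_weighted (w₁ := 2 * t - 1) (w₂ := 1 - t) (w₃ := 1 - t)
      (p₁ := h x * h y) (p₂ := h x * k (x⁻¹ * y)) (p₃ := h y * k (x⁻¹ * y))
      (by linarith) (by linarith) (by linarith) (by positivity) (by positivity) (by positivity)
      (by ring)
    rw [Real.mul_rpow h1 h2, Real.mul_rpow h1 h3, Real.mul_rpow h2 h3] at this
    have e1 : (h x) ^ t = (h x) ^ (2 * t - 1) * (h x) ^ (1 - t) := by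
      rw [← Real.rpow_add_of_nonneg h1 (by linarith) (by linarith)]; congr 1; ring
    have e2 : (h y) ^ t = (h y) ^ (2 * t - 1) * (h y) ^ (1 - t) := by
      rw [← Real.rpow_add_of_nonneg h2 (by linarith) (by linarith)]; congr 1; ring
    have e3 : (k (x⁻¹ * y)) ^ (2 * (1 - t)) =
        (k (x⁻¹ * y)) ^ (1 - t) * (k (x⁻¹ * y)) ^ (1 - t) := by
      rw [← Real.rpow_add_of_nonneg h3 (by linarith) (by linarith)]; congr 1; ring
    have hR1 := hRk x y
    calc R x y * (h y) ^ t * (h x) ^ t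
        ≤ (k (x⁻¹ * y)) ^ (2 * (1 - t)) * (h y) ^ t * (h x) ^ t := by gcongr
      _ = (h x) ^ (2 * t - 1) * (h y) ^ (2 * t - 1) *
          ((h x) ^ (1 - t) * (k (x⁻¹ * y)) ^ (1 - t)) *
          ((h y) ^ (1 - t) * (k (x⁻¹ * y)) ^ (1 - t)) := by rw [e1, e2, e3]; ring
      _ ≤ _ := this
      _ ≤ 1 * (h x * h y) + 1 * (h x * k (x⁻¹ * y)) + 1 * (h y * k (x⁻¹ * y)) := by
        gcongr <;> linarith
      _ = _ := by ring
  have hprod : ∀ f g : G → ℝ, (∀ x, 0 ≤ f x) → (∀ x, 0 ≤ g x) → Summable f → Summable g →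
      HasSum (fun z : G × G => f z.1 * g z.2) ((∑' x, f x) * ∑' x, g x) := by
    intro f g hf hg hfs hgs
    have hs := hfs.mul_of_nonneg hgs hf hg
    rw [hfs.tsum_mul_tsum hgs hs]
    exact hs.hasSum
  have s1 := hprod h h hh hh hhs hhs
  have s0 := hprod h k hh hk hhs hks
  let E1 : G × G ≃ G × G :=
    { toFun := fun z => (z.1, z.1⁻¹ * z.2)
      invFun := fun z => (z.1, z.1 * z.2)
      left_inv := fun z => by simp
      right_inv := fun z => by simp }
  let E2 : G × G ≃ G × G :=
    { toFun := fun z => (z.2, z.1⁻¹ * z.2)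
      invFun := fun z => (z.1 * z.2⁻¹, z.1)
      left_inv := fun z => by simp
      right_inv := fun z => by simp }
  have s2 : HasSum (fun z : G × G => h z.1 * k (z.1⁻¹ * z.2)) ((∑' x, h x) * ∑' x, k x) :=
    (E1.hasSum_iff).mpr s0
  have s3 : HasSum (fun z : G × G => h z.2 * k (z.1⁻¹ * z.2)) ((∑' x, h x) * ∑' x, k x) :=
    (E2.hasSum_iff).mpr s0
  have s4 := (s1.add s2).add s3
  have h0 : ∀ z : G × G, 0 ≤ R z.1 z.2 * (h z.2) ^ t * (h z.1) ^ t := fun z => by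
    have := hR z.1 z.2
    have := hh z.1
    have := hh z.2
    positivity
  have hs := Summable.of_nonneg_of_le h0 hpt s4.summable
  refine ⟨hs, ?_⟩
  refine (hs.tsum_le_tsum hpt s4.summable).trans ?_
  rw [s4.tsum_eq]
  apply le_of_eq; ring

/-- Pseudo-Poincaré inequality along a word. -/
lemma word_poincare [Group G] (S : Finset G) (u : G → ℝ) (hu : Summable (gradSq S u))
    (l : List G) (hl : ∀ s ∈ l, s ∈ S) :
    Summable (fun x => (u (x * l.prod) - u x) ^ 2) ∧
    ∑' x, (u (x * l.prod) - u x) ^ 2 ≤ (l.length : ℝ) ^ 2 * ∑' x, gradSq S u x := by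
  have hone : ∀ s ∈ S, Summable (fun x => (u (x * s) - u x) ^ 2) ∧
      ∑' x, (u (x * s) - u x) ^ 2 ≤ ∑' x, gradSq S u x := by
    intro s hs
    have hle : ∀ x, (u (x * s) - u x) ^ 2 ≤ gradSq S u x := fun x =>
      Finset.single_le_sum (f := fun s => (u (x * s) - u x) ^ 2) (fun _ _ => sq_nonneg _) hs
    have := Summable.of_nonneg_of_le (fun x => sq_nonneg _) hle hu
    exact ⟨this, this.tsum_le_tsum hle hu⟩
  induction l with
  | nil => simp
  | cons s l ih =>
    obtain ⟨i1, i2⟩ := ih (fun a ha => hl a (List.mem_cons_of_mem _ ha))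
    obtain ⟨j1, j2⟩ := hone s (hl s List.mem_cons_self)
    rcases Nat.eq_zero_or_pos l.length with h0 | hpos
    · have : l = [] := List.length_eq_zero_iff.mp h0
      subst this
      simpa using ⟨j1, j2⟩
    · have hk : (0 : ℝ) < l.length := by exact_mod_cast hpos
      set κ : ℝ := (l.length : ℝ) with hκ
      have t1 : HasSum (fun x => (u (x * s * l.prod) - u (x * s)) ^ 2)
          (∑' x, (u (x * l.prod) - u x) ^ 2) :=
        ((Equiv.mulRight s).hasSum_iff (f := fun x => (u (x * l.prod) - u x) ^ 2)).mpr i1.hasSum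
      have t2 := (t1.mul_left (1 + 1 / κ)).add (j1.hasSum.mul_left (1 + κ))
      have hle : ∀ x, (u (x * (s :: l).prod) - u x) ^ 2 ≤
          (1 + 1 / κ) * (u (x * s * l.prod) - u (x * s)) ^ 2 +
          (1 + κ) * (u (x * s) - u x) ^ 2 := by
        intro x
        rw [List.prod_cons, ← mul_assoc]
        set a := u (x * s * l.prod) - u (x * s) with ha
        set b := u (x * s) - u x with hb
        have e : u (x * s * l.prod) - u x = a + b := by rw [ha, hb]; ring
        rw [e]
        have : (1 + 1 / κ) * a ^ 2 + (1 + κ) * b ^ 2 - (a + b) ^ 2 = (a - κ * b) ^ 2 / κ := by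
          field_simp; ring
        have h2 : 0 ≤ (a - κ * b) ^ 2 / κ := by positivity
        linarith
      have hs := Summable.of_nonneg_of_le (fun x => sq_nonneg _) hle t2.summable
      refine ⟨hs, (hs.tsum_le_tsum hle t2.summable).trans ?_⟩
      rw [t2.tsum_eq]
      set D := ∑' x, gradSq S u x
      calc _ ≤ (1 + 1 / κ) * (κ ^ 2 * D) + (1 + κ) * D := by gcongr
        _ = _ := by
          rw [List.length_cons]; push_cast; rw [← hκ]; field_simp; ring

lemma word_sup [Group G] (S : Finset G) (u : G → ℝ) (ε : ℝ)
    (hε : ∀ x, ∀ s ∈ S, |u (x * s) - u x| ≤ ε)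
    (l : List G) (hl : ∀ s ∈ l, s ∈ S) (x : G) :
    |u (x * l.prod) - u x| ≤ l.length * ε := by
  induction l generalizing x with
  | nil => simp
  | cons s l ih =>
    have i1 := ih (fun a ha => hl a (List.mem_cons_of_mem _ ha)) (x * s)
    have i2 := hε x s (hl s List.mem_cons_self)
    rw [List.prod_cons, ← mul_assoc, List.length_cons]
    push_cast
    have := abs_sub_le (u (x * s * l.prod)) (u (x * s)) (u x)
    linarith

/-- Ball averages. -/
lemma exists_avg [Group G] (S : Finset G) (hS_gen : Subgroup.closure (S : Set G) = ⊤)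
    (hS_sym : ∀ s ∈ S, s⁻¹ ∈ S) (N : ℕ) (C₁ C₂ : ℝ) (hC₁ : 0 < C₁)
    (hgrowth : ∀ n : ℕ, 1 ≤ n →
      C₁ * (n : ℝ) ^ N ≤ (Nat.card {x : G // wordDist S 1 x ≤ n} : ℝ) ∧
      (Nat.card {x : G // wordDist S 1 x ≤ n} : ℝ) ≤ C₂ * (n : ℝ) ^ N)
    (u : G → ℝ) (hu : Summable (gradSq S u)) (q : ℝ) (hq : 1 ≤ q)
    (huq : Summable fun x => |u x| ^ q) (n : ℕ) (hn : 1 ≤ n) :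
    ∃ v : G → ℝ, (∀ x, |v x| ^ q ≤ (∑' x, |u x| ^ q) / (C₁ * (n : ℝ) ^ N)) ∧
      Summable (fun x => (u x - v x) ^ 2) ∧
      ∑' x, (u x - v x) ^ 2 ≤ (n : ℝ) ^ 2 * ∑' x, gradSq S u x ∧
      ∀ ε, 0 ≤ ε → (∀ x, ∀ s ∈ S, |u (x * s) - u x| ≤ ε) → ∀ x, |u x - v x| ≤ n * ε := by
  obtain ⟨B, hB, hBc, -⟩ := exists_ball S N C₁ C₂ hC₁ hgrowth n hn
  have hn0 : (0 : ℝ) < n := by exact_mod_cast hn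
  have hpos : 0 < C₁ * (n : ℝ) ^ N := by positivity
  have hcard : (0 : ℝ) < B.card := hpos.trans_le hBc
  set w : ℝ := (B.card : ℝ)⁻¹ with hw
  have hw0 : 0 < w := inv_pos.mpr hcard
  have hw1 : ∑ g ∈ B, w = 1 := by
    rw [Finset.sum_const, nsmul_eq_mul, hw, mul_inv_cancel₀ hcard.ne']
  have hdiff : ∀ x, u x - ∑ g ∈ B, w * u (x * g) = ∑ g ∈ B, w * (u x - u (x * g)) := by
    intro x
    simp_rw [mul_sub]
    rw [Finset.sum_sub_distrib, ← Finset.sum_mul, hw1, one_mul]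
  have hD : 0 ≤ ∑' x, gradSq S u x := tsum_nonneg fun x => Finset.sum_nonneg fun _ _ => sq_nonneg _
  refine ⟨fun x => ∑ g ∈ B, w * u (x * g), ?_, ?_⟩
  · intro x
    have h1 : |∑ g ∈ B, w * u (x * g)| ≤ ∑ g ∈ B, w * |u (x * g)| := by
      refine (Finset.abs_sum_le_sum_abs _ _).trans (le_of_eq ?_)
      exact Finset.sum_congr rfl fun g _ => by rw [abs_mul, abs_of_pos hw0]
    have h2 := Real.rpow_arith_mean_le_arith_mean_rpow B (fun _ => w) (fun g => |u (x * g)|)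
      (fun _ _ => hw0.le) hw1 (fun _ _ => abs_nonneg _) hq
    have h3 : ∑ g ∈ B, |u (x * g)| ^ q ≤ ∑' y, |u y| ^ q := by
      have e := (Equiv.mulLeft x).tsum_eq (fun y => |u y| ^ q)
      have hs := ((Equiv.mulLeft x).summable_iff (f := fun y => |u y| ^ q)).mpr huq
      rw [← e]
      exact hs.sum_le_tsum B (fun _ _ => Real.rpow_nonneg (abs_nonneg _) _)
    calc |∑ g ∈ B, w * u (x * g)| ^ q ≤ (∑ g ∈ B, w * |u (x * g)|) ^ q :=
          Real.rpow_le_rpow (abs_nonneg _) h1 (by linarith)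
      _ ≤ ∑ g ∈ B, w * |u (x * g)| ^ q := h2
      _ = w * ∑ g ∈ B, |u (x * g)| ^ q := by rw [Finset.mul_sum]
      _ ≤ w * ∑' y, |u y| ^ q := by gcongr
      _ = (∑' y, |u y| ^ q) / B.card := by rw [hw]; ring
      _ ≤ _ := by
        have : 0 ≤ ∑' y, |u y| ^ q := tsum_nonneg fun _ => by positivity
        gcongr
  have hg : ∀ g ∈ B, HasSum (fun x => (u x - u (x * g)) ^ 2) (∑' x, (u x - u (x * g)) ^ 2) ∧
      ∑' x, (u x - u (x * g)) ^ 2 ≤ (n : ℝ) ^ 2 * ∑' x, gradSq S u x := by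
    intro g hgB
    obtain ⟨l, hl, hlen, hprod⟩ := exists_word S hS_gen hS_sym g
    obtain ⟨a, b⟩ := word_poincare S u hu l hl
    rw [← hprod] at a b
    have hsymm : (fun x => (u x - u (x * g)) ^ 2) = fun x => (u (x * g) - u x) ^ 2 := by
      funext x; ring
    rw [hsymm]
    refine ⟨a.hasSum, b.trans ?_⟩
    have : (l.length : ℝ) ≤ n := by rw [hlen]; exact_mod_cast (hB g).mp hgB
    gcongr
  have hS2 : HasSum (fun x => ∑ g ∈ B, w * (u x - u (x * g)) ^ 2)
      (∑ g ∈ B, w * ∑' x, (u x - u (x * g)) ^ 2) :=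
    hasSum_sum fun g hgB => (hg g hgB).1.mul_left w
  have hle : ∀ x, (u x - ∑ g ∈ B, w * u (x * g)) ^ 2 ≤ ∑ g ∈ B, w * (u x - u (x * g)) ^ 2 := by
    intro x
    rw [hdiff]
    exact Real.pow_arith_mean_le_arith_mean_pow_of_even B (fun _ => w) _ (fun _ _ => hw0.le) hw1
      even_two
  have hs := Summable.of_nonneg_of_le (fun x => sq_nonneg _) hle hS2.summable
  refine ⟨hs, ?_, ?_⟩
  · refine (hs.tsum_le_tsum hle hS2.summable).trans ?_
    rw [hS2.tsum_eq]
    calc _ ≤ ∑ g ∈ B, w * ((n : ℝ) ^ 2 * ∑' x, gradSq S u x) := by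
          refine Finset.sum_le_sum fun g hgB => ?_
          have := (hg g hgB).2
          gcongr
      _ = _ := by rw [← Finset.sum_mul, hw1, one_mul]
  · intro ε hε0 hε x
    show |u x - ∑ g ∈ B, w * u (x * g)| ≤ _
    rw [hdiff]
    calc _ ≤ ∑ g ∈ B, |w * (u x - u (x * g))| := Finset.abs_sum_le_sum_abs _ _
      _ ≤ ∑ g ∈ B, w * (n * ε) := by
        refine Finset.sum_le_sum fun g hgB => ?_
        obtain ⟨l, hl, hlen, hprod⟩ := exists_word S hS_gen hS_sym g
        have h1 := word_sup S u ε hε l hl x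
        rw [← hprod, abs_sub_comm] at h1
        have : (l.length : ℝ) ≤ n := by rw [hlen]; exact_mod_cast (hB g).mp hgB
        rw [abs_mul, abs_of_pos hw0]
        gcongr
        exact h1.trans (by gcongr)
      _ = _ := by rw [← Finset.sum_mul, hw1, one_mul]

lemma lp_sup (u : G → ℝ) (a : ℝ) (ha : 0 < a) (hu : Summable fun x => |u x| ^ a) (x : G) :
    |u x| ≤ (∑' x, |u x| ^ a) ^ (1 / a) := by
  have h := hu.le_tsum x (fun y _ => Real.rpow_nonneg (abs_nonneg (u y)) a)
  have h2 := Real.rpow_le_rpow (Real.rpow_nonneg (abs_nonneg (u x)) a) h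
    (by positivity : (0 : ℝ) ≤ 1 / a)
  rwa [← Real.rpow_mul (abs_nonneg _), mul_one_div_cancel ha.ne', Real.rpow_one] at h2

lemma lp_mono (u : G → ℝ) (a b M : ℝ) (ha : 0 < a) (hab : a ≤ b) (hM : ∀ x, |u x| ≤ M)
    (hu : Summable fun x => |u x| ^ a) :
    Summable (fun x => |u x| ^ b) ∧ ∑' x, |u x| ^ b ≤ M ^ (b - a) * ∑' x, |u x| ^ a := by
  have hle : ∀ x, |u x| ^ b ≤ M ^ (b - a) * |u x| ^ a := by
    intro x
    have e : |u x| ^ b = |u x| ^ (b - a) * |u x| ^ a := by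
      rw [← Real.rpow_add_of_nonneg (abs_nonneg _) (by linarith) ha.le]; congr 1; ring
    rw [e]
    have := Real.rpow_le_rpow (abs_nonneg _) (hM x) (by linarith : 0 ≤ b - a)
    gcongr
  have hs := Summable.of_nonneg_of_le (fun x => Real.rpow_nonneg (abs_nonneg (u x)) b) hle
    (hu.mul_left _)
  refine ⟨hs, (hs.tsum_le_tsum hle (hu.mul_left _)).trans ?_⟩
  rw [tsum_mul_left]

/-- Non-endpoint Sobolev inequality. -/
lemma sobolev [Group G] (S : Finset G) (hS_gen : Subgroup.closure (S : Set G) = ⊤)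
    (hS_sym : ∀ s ∈ S, s⁻¹ ∈ S) (N : ℕ) (hN : 3 ≤ N) (C₁ C₂ : ℝ) (hC₁ : 0 < C₁)
    (hgrowth : ∀ n : ℕ, 1 ≤ n →
      C₁ * (n : ℝ) ^ N ≤ (Nat.card {x : G // wordDist S 1 x ≤ n} : ℝ) ∧
      (Nat.card {x : G // wordDist S 1 x ≤ n} : ℝ) ≤ C₂ * (n : ℝ) ^ N)
    (q : ℝ) (hq : 2 * (N : ℝ) / ((N : ℝ) - 2) < q) :
    ∃ C : ℝ, 0 ≤ C ∧ ∀ u : G → ℝ, MemD12 S N u → ∑' x, gradSq S u x = 1 →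
      Summable (fun x => |u x| ^ q) ∧ ∑' x, |u x| ^ q ≤ C := by
  have hN3 : (3 : ℝ) ≤ N := by exact_mod_cast hN
  have hN2 : (0 : ℝ) < (N : ℝ) - 2 := by linarith
  have hqN : 2 * (N : ℝ) < q * ((N : ℝ) - 2) := by rwa [div_lt_iff₀ hN2] at hq
  have hq2 : 2 < q := by
    refine lt_of_le_of_lt ?_ hq
    rw [le_div_iff₀ hN2]; linarith
  have hq0 : 0 < q := by linarith
  set c : ℝ := C₁ ^ (1 / q) with hc
  have hc0 : 0 < c := by positivity
  have hcq : c ^ q = C₁ := by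
    rw [hc, ← Real.rpow_mul hC₁.le, one_div_mul_cancel hq0.ne', Real.rpow_one]
  set ρ : ℝ := 2 ^ (-((N : ℝ) / q)) with hρ
  have hρ0 : 0 < ρ := by positivity
  have hρ1 : ρ < 1 := Real.rpow_lt_one_of_one_lt_of_neg (by norm_num) (by
    have : 0 < (N : ℝ) / q := by positivity
    linarith)
  have hρq : ρ ^ q = (2 ^ N)⁻¹ := by
    rw [hρ, ← Real.rpow_mul (by norm_num), neg_mul, div_mul_cancel₀ _ hq0.ne',
      Real.rpow_neg (by norm_num), Real.rpow_natCast]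
  have hgeo : 4 * ρ ^ (q - 2) < 1 := by
    have h4 : (4 : ℝ) = 2 ^ (2 : ℝ) := by norm_num
    rw [hρ, ← Real.rpow_mul (by norm_num), h4, ← Real.rpow_add (by norm_num)]
    refine Real.rpow_lt_one_of_one_lt_of_neg (by norm_num) ?_
    have : 2 + -((N : ℝ) / q) * (q - 2) = -((q * ((N : ℝ) - 2) - 2 * N) / q) := by
      field_simp; ring
    rw [this]
    have : 0 < (q * ((N : ℝ) - 2) - 2 * N) / q := div_pos (by linarith) hq0
    linarith
  set Bc : ℝ := 2 / (c * ρ) + 1 with hBc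
  have hBc0 : 0 < Bc := by positivity
  set Z : ℝ := ∑' j : ℕ, (4 * ρ ^ (q - 2)) ^ j with hZ
  have hZ0 : 0 ≤ Z := tsum_nonneg fun j => by positivity
  set C0 : ℝ := 4 * Bc ^ (q - 2) * Z with hC0
  have hC00 : 0 ≤ C0 := by positivity
  refine ⟨C0 ^ (q / 2), by positivity, ?_⟩
  intro u hu hD
  have hus : 0 < 2 * (N : ℝ) / ((N : ℝ) - 2) := by positivity
  obtain ⟨huq, -⟩ := lp_mono u _ q _ hus hq.le (lp_sup u _ hus hu.1) hu.1
  refine ⟨huq, ?_⟩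
  set Y := ∑' x, |u x| ^ q with hY
  have hY0 : 0 ≤ Y := tsum_nonneg fun _ => by positivity
  rcases hY0.eq_or_lt with h0 | hYpos
  · rw [← h0]; positivity
  set y : ℝ := Y ^ (1 / q) with hy
  have hy0 : 0 < y := by positivity
  have hyq : y ^ q = Y := by
    rw [hy, ← Real.rpow_mul hY0, one_div_mul_cancel hq0.ne', Real.rpow_one]
  have huy : ∀ x, |u x| ≤ y := lp_sup u q hq0 huq
  have hav := fun j : ℕ => exists_avg S hS_gen hS_sym N C₁ C₂ hC₁ hgrowth u hu.2 q (by linarith) huq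
    (2 ^ j) Nat.one_le_two_pow
  choose v hv1 hv2 hv3 _ using hav
  have hva : ∀ j x, |v j x| ≤ y / c * ρ ^ j := by
    intro j x
    rw [← Real.rpow_le_rpow_iff (abs_nonneg _) (by positivity) hq0]
    refine (hv1 j x).trans (le_of_eq ?_)
    rw [Real.mul_rpow (by positivity) (by positivity), Real.div_rpow hy0.le hc0.le, hyq, hcq,
      ← Real.rpow_natCast ρ, ← Real.rpow_mul hρ0.le, mul_comm (j : ℝ), Real.rpow_mul hρ0.le,
      hρq, Real.rpow_natCast]
    push_cast
    rw [inv_pow, ← pow_mul, ← pow_mul, mul_comm N j]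
    field_simp
    exact hY.symm
  have main := dyadic_bound (fun x => |u x| ^ q)
    (fun j x => 4 * (Bc * y * ρ ^ j) ^ (q - 2) * (u x - v j x) ^ 2)
    (fun j => (4 * Bc ^ (q - 2) * y ^ (q - 2)) * (4 * ρ ^ (q - 2)) ^ j)
    (fun x => by positivity) (fun j x => by positivity) ?_ (fun j => (hv2 j).mul_left _) ?_
    ((summable_geometric_of_lt_one (by positivity) hgeo).mul_left _)
  · have h1 := main.2
    rw [tsum_mul_left, ← hZ, ← hY] at h1
    have e : Y = y ^ (q - 2) * y ^ 2 := by
      rw [← hyq, ← Real.rpow_natCast y 2, ← Real.rpow_add hy0]; congr 1; push_cast; ring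
    have hyp : 0 < y ^ (q - 2) := by positivity
    have h2 : y ^ 2 ≤ C0 := by
      have : y ^ (q - 2) * y ^ 2 ≤ y ^ (q - 2) * C0 := by
        rw [← e, hC0]; refine h1.trans (le_of_eq ?_); ring
      exact le_of_mul_le_mul_left this hyp
    calc Y = (y ^ 2) ^ (q / 2) := by
          rw [← hyq, ← Real.rpow_natCast y 2, ← Real.rpow_mul hy0.le]; congr 1; push_cast; ring
      _ ≤ _ := Real.rpow_le_rpow (by positivity) h2 (by positivity)
  · intro x
    by_cases hx : u x = 0
    · refine ⟨0, ?_⟩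
      rw [hx, abs_zero, Real.zero_rpow hq0.ne']; positivity
    have hxp : 0 < |u x| := abs_pos.mpr hx
    have hex : ∃ j : ℕ, 2 * (y / c * ρ ^ j) ≤ |u x| := by
      obtain ⟨j, hj⟩ := exists_pow_lt_of_lt_one (show 0 < |u x| / (2 * (y / c)) by positivity) hρ1
      refine ⟨j, ?_⟩
      rw [lt_div_iff₀ (by positivity)] at hj
      linarith
    classical
    refine ⟨Nat.find hex, ?_⟩
    have hspec := Nat.find_spec hex
    have hL : |u x| ≤ Bc * y * ρ ^ (Nat.find hex) := by
      rcases hj : Nat.find hex with _ | j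
      · have := huy x
        have h2 : 0 ≤ 2 / (c * ρ) * y := by positivity
        rw [hBc, pow_zero, mul_one]; linarith
      · have := Nat.find_min hex (m := j) (by omega)
        push Not at this
        refine this.le.trans ?_
        have e : Bc * y * ρ ^ (j + 1) = 2 * (y / c * ρ ^ j) + y * ρ ^ (j + 1) := by
          rw [hBc]; field_simp; ring
        rw [e]
        have : 0 ≤ y * ρ ^ (j + 1) := by positivity
        linarith
    set j := Nat.find hex
    have h1 := hva j x
    have h2 : |u x| ≤ 2 * |u x - v j x| := by
      have := abs_sub_abs_le_abs_sub (u x) (v j x)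
      linarith
    have e : |u x| ^ q = |u x| ^ (q - 2) * |u x| ^ 2 := by
      rw [← Real.rpow_natCast |u x| 2, ← Real.rpow_add hxp]; congr 1; push_cast; ring
    have h3 : |u x| ^ 2 ≤ 4 * (u x - v j x) ^ 2 := by
      rw [← sq_abs (u x - v j x)]
      nlinarith [abs_nonneg (u x - v j x)]
    have h4 := Real.rpow_le_rpow hxp.le hL (by linarith : 0 ≤ q - 2)
    show |u x| ^ q ≤ 4 * (Bc * y * ρ ^ j) ^ (q - 2) * (u x - v j x) ^ 2
    rw [e]
    calc _ ≤ (Bc * y * ρ ^ j) ^ (q - 2) * (4 * (u x - v j x) ^ 2) := by gcongr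
      _ = _ := by ring
  · intro j
    rw [tsum_mul_left]
    have h1 := hv3 j
    rw [hD, mul_one] at h1
    calc _ ≤ 4 * (Bc * y * ρ ^ j) ^ (q - 2) * ((2 ^ j : ℕ) : ℝ) ^ 2 := by gcongr
      _ = _ := by
        rw [Real.mul_rpow (by positivity) (by positivity), Real.mul_rpow hBc0.le hy0.le,
          ← Real.rpow_natCast ρ, ← Real.rpow_mul hρ0.le, mul_comm (j : ℝ), Real.rpow_mul hρ0.le,
          Real.rpow_natCast, mul_pow]
        push_cast
        rw [← pow_mul, mul_comm j 2, pow_mul]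
        norm_num
        ring

lemma energy_eq (R : G → G → ℝ) (p : ℝ) (u : G → ℝ)
    (hs : Summable (fun z : G × G => R z.1 z.2 * |u z.2| ^ p * |u z.1| ^ p)) :
    energy R p u = ∑' z : G × G, R z.1 z.2 * |u z.2| ^ p * |u z.1| ^ p := by
  rw [hs.tsum_prod]
  unfold energy conv
  refine tsum_congr fun x => ?_
  rw [← tsum_mul_right]

lemma tsum_grad_eq_one [Group G] (S : Finset G) (u : G → ℝ) (h : D12Norm S u = 1) :
    ∑' x, gradSq S u x = 1 := by
  have h0 : 0 ≤ ∑' x, gradSq S u x :=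
    tsum_nonneg fun x => Finset.sum_nonneg fun _ _ => sq_nonneg _
  unfold D12Norm at h
  rw [← Real.sqrt_eq_rpow] at h
  exact Real.sqrt_eq_one.mp h

/-- A finitely supported test function with positive interaction. -/
lemma exists_test [Group G] (S : Finset G) (hS_e : (1 : G) ∉ S) (N : ℕ) (hN : 3 ≤ N)
    (s : G) (hs : s ∈ S) :
    ∃ u : G → ℝ, MemD12 S N u ∧ D12Norm S u = 1 ∧ 0 < |u 1| ∧ 0 < |u s| := by
  classical
  have hs1 : s ≠ 1 := fun h => hS_e (h ▸ hs)
  have hN3 : (3 : ℝ) ≤ N := by exact_mod_cast hN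
  have hN2 : (0 : ℝ) < (N : ℝ) - 2 := by linarith
  have hus : 0 < 2 * (N : ℝ) / ((N : ℝ) - 2) := by positivity
  let f : G → ℝ := fun x => if x = 1 then 2 else if x = s then 1 else 0
  have hf0 : ∀ x, x ∉ ({1, s} : Finset G) → f x = 0 := by
    intro x hx
    simp at hx
    simp [f, hx.1, hx.2]
  have hf1 : f 1 = 2 := by simp [f]
  have hfs : f s = 1 := by simp [f, hs1]
  have hsq : Summable fun x => (f x) ^ 2 :=
    summable_of_ne_finset_zero (s := {1, s}) fun x hx => by rw [hf0 x hx]; norm_num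
  have hgrad : Summable (gradSq S f) := by
    refine summable_sum fun a _ => ?_
    have h1 := ((Equiv.mulRight a).summable_iff (f := fun x => (f x) ^ 2)).mpr hsq
    refine Summable.of_nonneg_of_le (fun x => sq_nonneg _) (fun x => ?_)
      ((h1.mul_left 2).add (hsq.mul_left 2))
    simp only [Function.comp, Equiv.coe_mulRight]
    nlinarith [sq_nonneg (f (x * a) + f x)]
  set T := ∑' x, gradSq S f x with hT
  have hg0 : ∀ x, 0 ≤ gradSq S f x := fun x => Finset.sum_nonneg fun _ _ => sq_nonneg _
  have hTpos : 0 < T := by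
    refine hgrad.tsum_pos hg0 1 ?_
    have := Finset.single_le_sum (f := fun a => (f (1 * a) - f 1) ^ 2)
      (fun _ _ => sq_nonneg _) hs
    simp only [one_mul, hf1, hfs] at this
    unfold gradSq
    simp only [one_mul, hf1]
    linarith
  have hsT : 0 < Real.sqrt T := Real.sqrt_pos.mpr hTpos
  have hgs : ∀ x, gradSq S (fun x => (Real.sqrt T)⁻¹ * f x) x = T⁻¹ * gradSq S f x := by
    intro x
    unfold gradSq
    rw [Finset.mul_sum]
    refine Finset.sum_congr rfl fun a _ => ?_
    rw [← mul_sub, mul_pow, inv_pow, Real.sq_sqrt hTpos.le]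
  refine ⟨fun x => (Real.sqrt T)⁻¹ * f x, ⟨?_, ?_⟩, ?_, ?_, ?_⟩
  · refine summable_of_ne_finset_zero (s := {1, s}) fun x hx => ?_
    simp only [hf0 x hx]
    rw [mul_zero, abs_zero, Real.zero_rpow hus.ne']
  · have : gradSq S (fun x => (Real.sqrt T)⁻¹ * f x) = fun x => T⁻¹ * gradSq S f x := funext hgs
    rw [this]
    exact hgrad.mul_left _
  · unfold D12Norm
    simp_rw [hgs]
    rw [tsum_mul_left, ← hT, inv_mul_cancel₀ hTpos.ne', Real.one_rpow]
  · simp only [hf1]; positivity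
  · simp only [hfs]; positivity

theorem maximizing_sequence_gradient_lower_bound
    [Group G] [Countable G]
    (S : Finset G) (hS_gen : Subgroup.closure (S : Set G) = ⊤)
    (hS_sym : ∀ s ∈ S, s⁻¹ ∈ S) (hS_e : (1 : G) ∉ S)
    (N : ℕ) (hN : 3 ≤ N)
    (C₁ C₂ : ℝ) (hC₁ : 0 < C₁) (hC₂ : 0 < C₂)
    (hgrowth : ∀ n : ℕ, 1 ≤ n →
      C₁ * (n : ℝ) ^ N ≤ (Nat.card {x : G // wordDist S 1 x ≤ n} : ℝ) ∧
      (Nat.card {x : G // wordDist S 1 x ≤ n} : ℝ) ≤ C₂ * (n : ℝ) ^ N)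
    (α : ℝ) (hα : 0 < α) (hαN : α < N)
    (Rα : G → G → ℝ) (hR_nonneg : ∀ x y, 0 ≤ Rα x y)
    (hR_symm : ∀ x y, Rα x y = Rα y x)
    (c₁ c₂ : ℝ) (hc₁ : 0 < c₁) (hc₂ : 0 < c₂)
    (hR_low : ∀ x y : G, x ≠ y → c₁ * (wordDist S x y : ℝ) ^ (α - (N : ℝ)) ≤ Rα x y)
    (hR_up : ∀ x y : G, x ≠ y → Rα x y ≤ c₂ * (wordDist S x y : ℝ) ^ (α - (N : ℝ)))
    (hR_diag : ∀ x : G, Rα x x ≤ c₂)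
    (p : ℝ) (hp : ((N : ℝ) + α) / ((N : ℝ) - 2) < p)
    (u : ℕ → G → ℝ) (hmem : ∀ n, MemD12 S N (u n))
    (hnorm : ∀ n, D12Norm S (u n) = 1)
    (hmax : Tendsto (fun n => energy Rα p (u n)) atTop (𝓝 (bestK S N Rα p))) :
    0 < Filter.liminf
      (fun n => ⨆ x : G, ∑ s ∈ S, |u n (x * s) - u n x|) atTop := by
  classical
  have hN3 : (3 : ℝ) ≤ N := by exact_mod_cast hN
  have hN2 : (0 : ℝ) < (N : ℝ) - 2 := by linarith
  have hN0 : (0 : ℝ) < N := by linarith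
  have hp0 : 0 < p := lt_trans (by positivity) hp
  -- exponents
  have hpN : (N : ℝ) + α < p * ((N : ℝ) - 2) := by rwa [div_lt_iff₀ hN2] at hp
  obtain ⟨t, ht_low, ht_up⟩ : ∃ t, ((N : ℝ) + α) / (2 * N) < t ∧
      t < min 1 (p * ((N : ℝ) - 2) / (2 * N)) := by
    refine exists_between (lt_min ?_ ?_)
    · rw [div_lt_one (by positivity)]; linarith
    · gcongr
  have ht1 : t < 1 := ht_up.trans_le (min_le_left _ _)
  have htp : t < p * ((N : ℝ) - 2) / (2 * N) := ht_up.trans_le (min_le_right _ _)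
  have htα : (N : ℝ) + α < t * (2 * N) := by rwa [div_lt_iff₀ (by positivity)] at ht_low
  have ht_half : 1 / 2 < t := by
    refine lt_trans ?_ ht_low
    rw [lt_div_iff₀ (by positivity)]; linarith
  have ht0 : 0 < t := by linarith
  set m := p / t with hm
  obtain ⟨q, hq_low, hq_up⟩ : ∃ q, 2 * (N : ℝ) / ((N : ℝ) - 2) < q ∧ q < m := by
    refine exists_between ?_
    rw [hm, div_lt_div_iff₀ hN2 ht0]
    rw [lt_div_iff₀ (by positivity)] at htp
    linarith
  have hq1 : 1 ≤ q := by
    refine le_trans ?_ hq_low.le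
    rw [le_div_iff₀ hN2]; linarith
  have hq0 : 0 < q := by linarith
  obtain ⟨C, hC0, hsob⟩ := sobolev S hS_gen hS_sym N hN C₁ C₂ hC₁ hgrowth q hq_low
  -- kernel
  set σ : ℝ := 1 / (2 * (1 - t)) with hσ
  have h1t : 0 < 2 * (1 - t) := by linarith
  have hσ0 : 0 < σ := by positivity
  let k : G → ℝ := fun z => (if z = 1 then c₂ else c₂ * (wordDist S 1 z : ℝ) ^ (α - (N : ℝ))) ^ σ
  have hk0b : ∀ z : G, 0 ≤ (if z = 1 then c₂ else c₂ * (wordDist S 1 z : ℝ) ^ (α - (N : ℝ))) := by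
    intro z; split_ifs <;> positivity
  have hk0 : ∀ z, 0 ≤ k z := fun z => Real.rpow_nonneg (hk0b z) _
  have hks : Summable k := by
    have h1 := summable_dist S N C₁ C₂ hC₁ hgrowth (((N : ℝ) - α) * σ) (by
      rw [hσ, mul_one_div, lt_div_iff₀ h1t]; nlinarith)
    have h2 : Summable fun z : G => if z = 1 then c₂ ^ σ else 0 :=
      summable_of_ne_finset_zero (s := {1}) fun x hx => by
        simp at hx; simp [hx]
    refine Summable.of_nonneg_of_le hk0 (fun z => ?_) ((h1.mul_left (c₂ ^ σ)).add h2)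
    by_cases hz : z = 1
    · simp only [k, hz, if_true]
      have : 0 ≤ c₂ ^ σ * (wordDist S 1 (1 : G) : ℝ) ^ (-(((N : ℝ) - α) * σ)) := by positivity
      linarith
    · simp only [k, hz, if_false, add_zero]
      rw [Real.mul_rpow hc₂.le (by positivity), ← Real.rpow_mul (by positivity)]
      apply le_of_eq; congr 2; ring
  have hRk : ∀ x y, Rα x y ≤ (k (x⁻¹ * y)) ^ (2 * (1 - t)) := by
    intro x y
    have e : (k (x⁻¹ * y)) ^ (2 * (1 - t)) = if x⁻¹ * y = 1 then c₂ else
        c₂ * (wordDist S 1 (x⁻¹ * y) : ℝ) ^ (α - (N : ℝ)) := by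
      simp only [k]
      rw [← Real.rpow_mul (hk0b _), hσ, one_div_mul_cancel h1t.ne', Real.rpow_one]
    rw [e]
    by_cases hxy : x = y
    · subst hxy; simpa using hR_diag x
    · have : x⁻¹ * y ≠ 1 := fun h => hxy (inv_mul_eq_one.mp h)
      rw [if_neg this, ← wordDist_translate]
      exact hR_up x y hxy
  set κ := ∑' z, k z with hκ
  have hκ0 : 0 ≤ κ := tsum_nonneg hk0
  -- energy bound
  have hen : ∀ w : G → ℝ, MemD12 S N w → D12Norm S w = 1 → ∀ M, 0 ≤ M → (∀ x, |w x| ≤ M) →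
      Summable (fun z : G × G => Rα z.1 z.2 * |w z.2| ^ p * |w z.1| ^ p) ∧
      energy Rα p w ≤ (M ^ (m - q) * C) ^ 2 + 2 * (M ^ (m - q) * C) * κ := by
    intro w hw hw1 M hM0 hM
    obtain ⟨hwq, hwC⟩ := hsob w hw (tsum_grad_eq_one S w hw1)
    obtain ⟨hms, hmle⟩ := lp_mono w q m M hq0 hq_up.le hM hwq
    have hy := young_bound Rα hR_nonneg t ht_half ht1 (fun x => |w x| ^ m) k
      (fun x => by positivity) hk0 hms hks hRk
    have e : ∀ x, (|w x| ^ m) ^ t = |w x| ^ p := by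
      intro x
      rw [← Real.rpow_mul (abs_nonneg _), hm, div_mul_cancel₀ _ ht0.ne']
    simp only [e] at hy
    refine ⟨hy.1, ?_⟩
    rw [energy_eq Rα p w hy.1]
    refine hy.2.trans ?_
    have hA0 : 0 ≤ ∑' x, |w x| ^ m := tsum_nonneg fun _ => by positivity
    have hA : ∑' x, |w x| ^ m ≤ M ^ (m - q) * C := hmle.trans (by gcongr)
    rw [← hκ]
    gcongr
  have hsup : ∀ w : G → ℝ, MemD12 S N w → D12Norm S w = 1 → ∀ x, |w x| ≤ C ^ (1 / q) := by
    intro w hw hw1 x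
    obtain ⟨hwq, hwC⟩ := hsob w hw (tsum_grad_eq_one S w hw1)
    refine (lp_sup w q hq0 hwq x).trans ?_
    exact Real.rpow_le_rpow (tsum_nonneg fun _ => by positivity) hwC (by positivity)
  -- K > 0
  have hKpos : 0 < bestK S N Rα p := by
    have hSne : S.Nonempty := by
      rw [Finset.nonempty_iff_ne_empty]
      intro h
      have := tsum_grad_eq_one S (u 0) (hnorm 0)
      simp [gradSq, h] at this
    obtain ⟨s, hs⟩ := hSne
    have hs1 : (1 : G) ≠ s := fun h => hS_e (h ▸ hs)
    obtain ⟨w, hw, hw1, hwa, hwb⟩ := exists_test S hS_e N hN s hs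
    have hwe := hen w hw hw1 _ (by positivity) (hsup w hw hw1)
    have hpos : 0 < energy Rα p w := by
      rw [energy_eq Rα p w hwe.1]
      refine hwe.1.tsum_pos (fun z => ?_) (1, s) ?_
      · have := hR_nonneg z.1 z.2
        positivity
      · have h1 := hR_low 1 s hs1
        have h2 : 0 < wordDist S 1 s := by
          obtain ⟨l, _, hl2, hl3⟩ := exists_word S hS_gen hS_sym s
          rw [← hl2]
          refine List.length_pos_iff.mpr fun h => hs1 ?_
          rw [hl3, h]; simp
        have h3 : (0 : ℝ) < wordDist S 1 s := by exact_mod_cast h2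
        have h4 : 0 < Rα 1 s := lt_of_lt_of_le (by positivity) h1
        show 0 < Rα 1 s * |w s| ^ p * |w 1| ^ p
        positivity
    refine hpos.trans_le (le_csSup
      ⟨((C ^ (1 / q)) ^ (m - q) * C) ^ 2 + 2 * ((C ^ (1 / q)) ^ (m - q) * C) * κ, ?_⟩ ⟨w, hw, hw1, rfl⟩)
    rintro _ ⟨w, hw, hw1, rfl⟩
    exact (hen w hw hw1 _ (by positivity) (hsup w hw hw1)).2
  set K := bestK S N Rα p with hK
  -- choice of η
  have hmq : 0 < m - q := by linarith
  obtain ⟨η, hη0, hη⟩ : ∃ η : ℝ, 0 < η ∧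
      (η ^ (m - q) * C) ^ 2 + 2 * (η ^ (m - q) * C) * κ < K / 2 := by
    have hc : Continuous fun η : ℝ => (η ^ (m - q) * C) ^ 2 + 2 * (η ^ (m - q) * C) * κ := by
      have : Continuous fun η : ℝ => η ^ (m - q) :=
        Real.continuous_rpow_const hmq.le
      fun_prop
    have h0 := hc.tendsto 0
    rw [Real.zero_rpow hmq.ne'] at h0
    have hev := h0.eventually_lt_const (u := K / 2) (by simp; exact hKpos)
    have hev2 : ∀ᶠ η : ℝ in 𝓝[>] 0, _ := hev.filter_mono nhdsWithin_le_nhds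
    obtain ⟨η, h1, h2⟩ := (hev2.and self_mem_nhdsWithin).exists
    exact ⟨η, h2, h1⟩
  obtain ⟨n, hn⟩ := exists_nat_ge (C / (C₁ * (η / 2) ^ q) + 1)
  have hn1 : (1 : ℝ) ≤ n := le_trans (by
    have : 0 ≤ C / (C₁ * (η / 2) ^ q) := by positivity
    linarith) hn
  have hn0 : (0 : ℝ) < n := by linarith
  have hnN : C / (C₁ * (n : ℝ) ^ N) ≤ (η / 2) ^ q := by
    have h1 : (n : ℝ) ≤ (n : ℝ) ^ N := le_self_pow₀ hn1 (by omega)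
    have h2 : C / (C₁ * (η / 2) ^ q) ≤ (n : ℝ) ^ N := by linarith
    rw [div_le_iff₀ (by positivity)] at h2 ⊢
    linarith
  have hsmall : ∀ w : G → ℝ, MemD12 S N w → D12Norm S w = 1 →
      (∀ x, ∀ s ∈ S, |w (x * s) - w x| ≤ η / (2 * n)) → energy Rα p w < K / 2 := by
    intro w hw hw1 hg
    obtain ⟨hwq, hwC⟩ := hsob w hw (tsum_grad_eq_one S w hw1)
    obtain ⟨v, hv1, -, -, hv4⟩ := exists_avg S hS_gen hS_sym N C₁ C₂ hC₁ hgrowth w hw.2 q hq1 hwq n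
      (by exact_mod_cast hn1)
    refine lt_of_le_of_lt (hen w hw hw1 η hη0.le fun x => ?_).2 hη
    have h1 := hv4 _ (by positivity) hg x
    have h2 : |v x| ≤ η / 2 := by
      rw [← Real.rpow_le_rpow_iff (abs_nonneg _) (by positivity) hq0]
      refine (hv1 x).trans (le_trans ?_ hnN)
      gcongr
    have e : (n : ℝ) * (η / (2 * n)) = η / 2 := by field_simp
    have h3 := abs_sub_abs_le_abs_sub (w x) (v x)
    linarith
  -- uniform bounds on the gradient
  have hgr : ∀ i x, ∀ s ∈ S, |u i (x * s) - u i x| ≤ 1 := by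
    intro i x s hs
    have h1 := tsum_grad_eq_one S (u i) (hnorm i)
    have h2 := (hmem i).2.le_tsum x (fun y _ => Finset.sum_nonneg fun _ _ => sq_nonneg _)
    have h3 := Finset.single_le_sum (f := fun s => (u i (x * s) - u i x) ^ 2)
      (fun _ _ => sq_nonneg _) hs
    rw [h1] at h2
    have h4 : (u i (x * s) - u i x) ^ 2 ≤ 1 := h3.trans h2
    exact (sq_le_one_iff_abs_le_one _).mp h4
  have hgs : ∀ i x, ∑ s ∈ S, |u i (x * s) - u i x| ≤ S.card := by
    intro i x
    refine (Finset.sum_le_sum fun s hs => hgr i x s hs).trans ?_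
    simp
  have hε0 : 0 < η / (2 * n) := by positivity
  refine hε0.trans_le (le_liminf_of_le ?_ ?_)
  · refine Filter.IsBoundedUnder.isCoboundedUnder_ge ⟨(S.card : ℝ), ?_⟩
    simp only [eventually_map]
    exact Eventually.of_forall fun i => ciSup_le (hgs i)
  · have hev := hmax.eventually_const_lt (u := K / 2) (by linarith)
    filter_upwards [hev] with i hi
    by_contra hlt
    push Not at hlt
    refine absurd (hsmall (u i) (hmem i) (hnorm i) fun x s hs => ?_) (not_lt.mpr hi.le)
    have h1 := Finset.single_le_sum (f := fun s => |u i (x * s) - u i x|)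
      (fun _ _ => abs_nonneg _) hs
    have h2 := le_ciSup (f := fun x => ∑ s ∈ S, |u i (x * s) - u i x|)
      ⟨(S.card : ℝ), by rintro _ ⟨x, rfl⟩; exact hgs i x⟩ x
    exact h1.trans (h2.trans hlt.le)

end Choquard
end
end

section
/- Let N ≥ 3, α ∈ (0, N−2), and 1 ≤ p < (N−α)/2. Then there is a constant C > 0 such that for every u ∈ D^{1,p}(G): ∑_{x∈G} (R_α ∗ |u|^p)(x)·|u(x)|^p ≤ C·( ∑_{x∈G} ∑_{y∼x} |u(y)−u(x)|^p )². -/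
open Filter Topology

noncomputable section

namespace Choquard

variable {G : Type*}

/-- Jensen in the form used below. -/
theorem aux_abs_sum_rpow {ι : Type*} (s : Finset ι) (f : ι → ℝ) {p : ℝ} (hp : 1 ≤ p) :
    |∑ i ∈ s, f i| ^ p ≤ (s.card : ℝ) ^ (p - 1) * ∑ i ∈ s, |f i| ^ p :=
  (Real.rpow_le_rpow (abs_nonneg _) (Finset.abs_sum_le_sum_abs _ _) (by linarith)).trans
    (Real.rpow_sum_le_const_mul_sum_rpow s f hp)

theorem aux_geom (τ : ℝ) (h0 : 0 ≤ τ) (h1 : τ < 1) (n : ℕ) :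
    ∑ k ∈ Finset.range n, τ ^ k ≤ (1 - τ)⁻¹ := by
  rw [← tsum_geometric_of_lt_one h0 h1]
  exact (summable_geometric_of_lt_one h0 h1).sum_le_tsum _ (fun i _ => by positivity)

/-- Abstract summation of a telescoping series with slack. -/
theorem aux_telescope {X : Type*} (p q : ℝ) (hp : 1 ≤ p) (hpq : p ≤ q) (K a b : ℝ) (hK : 0 < K)
    (ha : 0 < a) (hb : 0 < b) (hab : a ^ ((q - p) / p) * b < 1) :
    ∃ A : ℝ, 0 < A ∧ ∀ U : ℕ → X → ℝ,
      (∀ x, Tendsto (fun k => U k x) atTop (𝓝 0)) →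
      (∀ k x, |U k x - U (k + 1) x| ^ p ≤ K * a ^ k) →
      (∀ k (F : Finset X), ∑ x ∈ F, |U k x - U (k + 1) x| ^ p ≤ K * b ^ k) →
      ∀ F : Finset X, ∑ x ∈ F, |U 0 x| ^ q ≤ A := by
  set e : ℝ := (q - p) / p with he
  set σ : ℝ := a ^ e * b with hσ
  have hq0 : 0 < q := by linarith
  have hσ0 : 0 < σ := by positivity
  set τ : ℝ := σ ^ (1 / q) with hτ
  have hτ0 : 0 < τ := by positivity
  have hτ1 : τ < 1 := Real.rpow_lt_one hσ0.le hab (by positivity)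
  have hτσ : τ ^ q = σ := by
    rw [hτ, ← Real.rpow_mul hσ0.le]; field_simp; simp
  have he0 : 0 ≤ e := div_nonneg (by linarith) (by linarith)
  set W : ℝ := (1 - τ)⁻¹ with hW
  have hW0 : 0 < W := inv_pos.2 (by linarith)
  set K' : ℝ := K ^ e * K with hK'
  have hK'0 : 0 < K' := by positivity
  refine ⟨W ^ (q - 1) * (K' * W), by positivity, ?_⟩
  intro U hlim h1 h2 F
  have hvq : ∀ k, ∑ x ∈ F, |U k x - U (k + 1) x| ^ q ≤ K' * σ ^ k := by
    intro k
    have hpt : ∀ x, |U k x - U (k + 1) x| ^ q ≤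
        (K * a ^ k) ^ e * |U k x - U (k + 1) x| ^ p := by
      intro x
      have : |U k x - U (k + 1) x| ^ q
          = (|U k x - U (k + 1) x| ^ p) ^ e * |U k x - U (k + 1) x| ^ p := by
        have h := abs_nonneg (U k x - U (k + 1) x)
        rw [← Real.rpow_mul h]
        rw [← Real.rpow_add_of_nonneg h (by positivity) (by linarith)]
        congr 1
        rw [he]; field_simp; ring
      rw [this]
      gcongr
      exact h1 k x
    calc _ ≤ ∑ x ∈ F, (K * a ^ k) ^ e * |U k x - U (k + 1) x| ^ p := Finset.sum_le_sum fun x _ => hpt x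
      _ = (K * a ^ k) ^ e * ∑ x ∈ F, |U k x - U (k + 1) x| ^ p := by rw [Finset.mul_sum]
      _ ≤ (K * a ^ k) ^ e * (K * b ^ k) := by gcongr; exact h2 k F
      _ = K' * σ ^ k := by
        rw [Real.mul_rpow hK.le (by positivity), hσ, mul_pow, hK', ← Real.rpow_natCast a k,
          ← Real.rpow_mul ha.le, mul_comm (k : ℝ) e, Real.rpow_mul ha.le, Real.rpow_natCast]
        ring
  -- finite bound
  have hfin : ∀ n, ∑ x ∈ F, |U 0 x - U n x| ^ q ≤ W ^ (q - 1) * (K' * W) := by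
    intro n
    have hpt : ∀ x, |U 0 x - U n x| ^ q ≤
        W ^ (q - 1) * ∑ k ∈ Finset.range n, τ ^ k * (σ ^ k)⁻¹ * |U k x - U (k + 1) x| ^ q := by
      intro x
      have e1 : U 0 x - U n x = ∑ k ∈ Finset.range n, (U k x - U (k + 1) x) := by
        rw [Finset.sum_range_sub']
      have e2 : |U 0 x - U n x| ≤
          ∑ k ∈ Finset.range n, τ ^ k * ((τ ^ k)⁻¹ * |U k x - U (k + 1) x|) := by
        rw [e1]
        refine (Finset.abs_sum_le_sum_abs _ _).trans (le_of_eq ?_)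
        refine Finset.sum_congr rfl fun k _ => ?_
        rw [mul_inv_cancel_left₀ (by positivity)]
      have e3 := e2.trans (Real.inner_le_weight_mul_Lp_of_nonneg (Finset.range n)
        (hp.trans hpq) (fun k => τ ^ k) (fun k => (τ ^ k)⁻¹ * |U k x - U (k + 1) x|)
        (fun k => by positivity) (fun k => by positivity))
      have e4 := Real.rpow_le_rpow (abs_nonneg _) e3 hq0.le
      have s0 : 0 ≤ ∑ k ∈ Finset.range n, τ ^ k := Finset.sum_nonneg fun k _ => by positivity
      have s1 : 0 ≤ ∑ k ∈ Finset.range n, τ ^ k * ((τ ^ k)⁻¹ * |U k x - U (k + 1) x|) ^ q :=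
        Finset.sum_nonneg fun k _ => by positivity
      rw [Real.mul_rpow (by positivity) (by positivity), ← Real.rpow_mul s0, ← Real.rpow_mul s1,
        inv_mul_cancel₀ hq0.ne', Real.rpow_one] at e4
      refine e4.trans ?_
      have e5 : (1 - q⁻¹) * q = q - 1 := by field_simp
      rw [e5]
      have e6 : ∑ k ∈ Finset.range n, τ ^ k * ((τ ^ k)⁻¹ * |U k x - U (k + 1) x|) ^ q
          = ∑ k ∈ Finset.range n, τ ^ k * (σ ^ k)⁻¹ * |U k x - U (k + 1) x| ^ q := by
        refine Finset.sum_congr rfl fun k _ => ?_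
        rw [Real.mul_rpow (by positivity) (by positivity), Real.inv_rpow (by positivity),
          ← Real.rpow_natCast τ k, ← Real.rpow_mul hτ0.le, mul_comm (k : ℝ) q,
          Real.rpow_mul hτ0.le, hτσ]
        simp only [Real.rpow_natCast]
        ring
      rw [e6]
      have : 0 ≤ ∑ k ∈ Finset.range n, τ ^ k * (σ ^ k)⁻¹ * |U k x - U (k + 1) x| ^ q :=
        Finset.sum_nonneg fun k _ => by positivity
      gcongr
      · linarith
      · exact aux_geom τ hτ0.le hτ1 n
    calc _ ≤ ∑ x ∈ F, W ^ (q - 1) *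
          ∑ k ∈ Finset.range n, τ ^ k * (σ ^ k)⁻¹ * |U k x - U (k + 1) x| ^ q :=
          Finset.sum_le_sum fun x _ => hpt x
      _ = W ^ (q - 1) * ∑ k ∈ Finset.range n, τ ^ k * (σ ^ k)⁻¹ *
            ∑ x ∈ F, |U k x - U (k + 1) x| ^ q := by
          rw [← Finset.mul_sum, Finset.sum_comm]
          simp only [Finset.mul_sum]
      _ ≤ W ^ (q - 1) * ∑ k ∈ Finset.range n, τ ^ k * (σ ^ k)⁻¹ * (K' * σ ^ k) := by
          gcongr with k hk
          exact hvq k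
      _ = W ^ (q - 1) * (K' * ∑ k ∈ Finset.range n, τ ^ k) := by
          congr 1
          rw [Finset.mul_sum]
          refine Finset.sum_congr rfl fun k _ => ?_
          field_simp
      _ ≤ _ := by
          gcongr
          exact aux_geom τ hτ0.le hτ1 n
  have ht : Tendsto (fun n => ∑ x ∈ F, |U 0 x - U n x| ^ q) atTop (𝓝 (∑ x ∈ F, |U 0 x| ^ q)) := by
    refine tendsto_finsetSum _ fun x _ => ?_
    have := ((tendsto_const_nhds (x := U 0 x)).sub (hlim x)).abs
    rw [sub_zero] at this
    exact this.rpow_const (Or.inr hq0.le)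
  exact le_of_tendsto' ht hfin

section words

variable [Group G] (S : Finset G)

theorem aux_word (hS_gen : Subgroup.closure (S : Set G) = ⊤)
    (hS_sym : ∀ s ∈ S, s⁻¹ ∈ S) (z : G) :
    ∃ l : List G, (∀ s ∈ l, s ∈ S) ∧ l.length = wordDist S 1 z ∧ z = l.prod := by
  have hne : {k : ℕ | ∃ l : List G, (∀ s ∈ l, s ∈ S) ∧ l.length = k ∧ z = 1 * l.prod}.Nonempty := by
    have hz : z ∈ Subgroup.closure (S : Set G) := by rw [hS_gen]; trivial
    have : ∃ l : List G, (∀ s ∈ l, s ∈ S) ∧ z = l.prod := by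
      induction hz using Subgroup.closure_induction with
      | mem x hx => exact ⟨[x], by simpa using hx, by simp⟩
      | one => exact ⟨[], by simp, by simp⟩
      | mul x y _ _ hx hy =>
        obtain ⟨l, hl, rfl⟩ := hx
        obtain ⟨m, hm, rfl⟩ := hy
        refine ⟨l ++ m, ?_, by simp⟩
        intro s hs
        rcases List.mem_append.1 hs with h | h
        · exact hl s h
        · exact hm s h
      | inv x _ hx =>
        obtain ⟨l, hl, rfl⟩ := hx
        refine ⟨(l.map fun x => x⁻¹).reverse, ?_, by rw [List.prod_inv_reverse]⟩
        intro s hs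
        simp only [List.mem_reverse, List.mem_map] at hs
        obtain ⟨t, ht, rfl⟩ := hs
        exact hS_sym t (hl t ht)
    obtain ⟨l, hl, h⟩ := this
    exact ⟨l.length, l, hl, rfl, by simpa using h⟩
  obtain ⟨l, h1, h2, h3⟩ := Nat.sInf_mem hne
  exact ⟨l, h1, h2, by simpa using h3⟩

theorem aux_dist_le (l : List G) (hl : ∀ s ∈ l, s ∈ S) : wordDist S 1 l.prod ≤ l.length :=
  Nat.sInf_le ⟨l, hl, rfl, by simp⟩

theorem aux_dist_left (x y : G) : wordDist S x y = wordDist S 1 (x⁻¹ * y) := by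
  unfold wordDist
  congr 1
  ext k
  simp only [Set.mem_ofPred_eq, one_mul, inv_mul_eq_iff_eq_mul]

theorem aux_dist_inv_mul (hS_gen : Subgroup.closure (S : Set G) = ⊤)
    (hS_sym : ∀ s ∈ S, s⁻¹ ∈ S) (g h : G) :
    wordDist S 1 (g⁻¹ * h) ≤ wordDist S 1 g + wordDist S 1 h := by
  obtain ⟨l, hl, hl2, hg⟩ := aux_word S hS_gen hS_sym g
  obtain ⟨m, hm, hm2, hh⟩ := aux_word S hS_gen hS_sym h
  have := aux_dist_le S ((l.map fun x => x⁻¹).reverse ++ m) (by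
    intro s hs
    rcases List.mem_append.1 hs with h | h
    · simp only [List.mem_reverse, List.mem_map] at h
      obtain ⟨t, ht, rfl⟩ := h
      exact hS_sym t (hl t ht)
    · exact hm s h)
  rw [List.prod_append, ← List.prod_inv_reverse, ← hg, ← hh] at this
  simpa [hl2, hm2] using this

theorem aux_dist_zero (hS_gen : Subgroup.closure (S : Set G) = ⊤)
    (hS_sym : ∀ s ∈ S, s⁻¹ ∈ S) (g : G) : wordDist S 1 g ≤ 0 ↔ g = 1 := by
  constructor
  · intro h
    obtain ⟨l, hl, hl2, hg⟩ := aux_word S hS_gen hS_sym g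
    have : l = [] := List.length_eq_zero_iff.1 (by omega)
    rw [hg, this]; simp
  · rintro rfl
    simpa using aux_dist_le S [] (by simp)

/-- Translation estimate: moving by an element of word length at most `L`. -/
theorem aux_translate (hS_gen : Subgroup.closure (S : Set G) = ⊤)
    (hS_sym : ∀ s ∈ S, s⁻¹ ∈ S) (p : ℝ) (hp : 1 ≤ p) (u : G → ℝ) (hsum : Summable (gradP S p u))
    (z : G) (L : ℕ) (hz : wordDist S 1 z ≤ L) (F : Finset G) :
    ∑ y ∈ F, |u (y * z) - u y| ^ p ≤ (L : ℝ) ^ p * ∑' x, gradP S p u x := by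
  obtain ⟨l, hl, hl2, hg⟩ := aux_word S hS_gen hS_sym z
  have hE : ∀ g, 0 ≤ gradP S p u g := fun g => Finset.sum_nonneg fun s _ => by positivity
  set E := ∑' x, gradP S p u x with hEdef
  have hE0 : 0 ≤ E := tsum_nonneg hE
  have hpt : ∀ y, |u (y * z) - u y| ^ p ≤ (l.length : ℝ) ^ (p - 1) *
      ∑ i ∈ Finset.range l.length, gradP S p u (y * (l.take i).prod) := by
    intro y
    have e1 : u (y * z) - u y = ∑ i ∈ Finset.range l.length,
        (u (y * (l.take (i + 1)).prod) - u (y * (l.take i).prod)) := by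
      rw [Finset.sum_range_sub (fun i => u (y * (l.take i).prod))]
      simp [hg]
    rw [e1]
    refine (aux_abs_sum_rpow _ _ hp).trans ?_
    rw [Finset.card_range]
    gcongr with i hi
    have hi' : i < l.length := Finset.mem_range.1 hi
    rw [List.prod_take_succ l i hi', ← mul_assoc]
    exact Finset.single_le_sum (f := fun s => |u (y * (l.take i).prod * s) -
      u (y * (l.take i).prod)| ^ p) (fun s _ => by positivity) (hl _ (List.getElem_mem hi'))
  have hF : ∀ w : G, ∑ y ∈ F, gradP S p u (y * w) ≤ E := by
    intro w
    have : ∑ y ∈ F, gradP S p u (y * w) =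
        ∑ y ∈ F.map (Equiv.mulRight w).toEmbedding, gradP S p u y := by
      rw [Finset.sum_map]; rfl
    rw [this]
    exact hsum.sum_le_tsum _ fun i _ => hE i
  calc _ ≤ ∑ y ∈ F, (l.length : ℝ) ^ (p - 1) *
      ∑ i ∈ Finset.range l.length, gradP S p u (y * (l.take i).prod) :=
        Finset.sum_le_sum fun y _ => hpt y
    _ = (l.length : ℝ) ^ (p - 1) * ∑ i ∈ Finset.range l.length,
        ∑ y ∈ F, gradP S p u (y * (l.take i).prod) := by
        rw [← Finset.mul_sum, Finset.sum_comm]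
    _ ≤ (l.length : ℝ) ^ (p - 1) * ∑ i ∈ Finset.range l.length, E := by
        gcongr with i hi
        exact hF _
    _ = (l.length : ℝ) ^ (p - 1) * (l.length * E) := by simp
    _ ≤ (L : ℝ) ^ (p - 1) * (L * E) := by
        have : (l.length : ℝ) ≤ L := by exact_mod_cast hl2.trans_le hz
        gcongr
    _ = (L : ℝ) ^ p * E := by
        rcases Nat.eq_zero_or_pos L with h | h
        · subst h
          simp [Real.zero_rpow (show p ≠ 0 by linarith)]
        · have : (0 : ℝ) < L := by exact_mod_cast h
          rw [Real.rpow_sub_one this.ne']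
          field_simp

end words

section averages

variable [Group G]

/-- Average of `u` over `x * A`. -/
def avgOn (A : Finset G) (u : G → ℝ) (x : G) : ℝ := (A.card : ℝ)⁻¹ * ∑ g ∈ A, u (x * g)

theorem aux_avg_rpow (A : Finset G) (hA : A.Nonempty) (u : G → ℝ) {p : ℝ} (hp : 1 ≤ p) (x : G) :
    |avgOn A u x| ^ p ≤ (A.card : ℝ)⁻¹ * ∑ g ∈ A, |u (x * g)| ^ p := by
  have hc : (0 : ℝ) < A.card := by exact_mod_cast hA.card_pos
  unfold avgOn
  rw [abs_mul, abs_of_pos (inv_pos.2 hc), Real.mul_rpow (by positivity) (by positivity)]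
  calc _ ≤ ((A.card : ℝ)⁻¹) ^ p * ((A.card : ℝ) ^ (p - 1) * ∑ g ∈ A, |u (x * g)| ^ p) := by
        gcongr
        exact aux_abs_sum_rpow _ _ hp
    _ = _ := by
        rw [← mul_assoc]
        congr 1
        rw [Real.inv_rpow hc.le, Real.rpow_sub_one hc.ne']
        have : (A.card : ℝ) ^ p ≠ 0 := by positivity
        field_simp

theorem aux_avg_diff (A B : Finset G) (hA : A.Nonempty) (hB : B.Nonempty) (u : G → ℝ) {p : ℝ}
    (hp : 1 ≤ p) (x : G) :
    |avgOn A u x - avgOn B u x| ^ p ≤ ((A.card : ℝ) * B.card)⁻¹ *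
      ∑ g ∈ A, ∑ h ∈ B, |u (x * h) - u (x * g)| ^ p := by
  have ha : (0 : ℝ) < A.card := by exact_mod_cast hA.card_pos
  have hb : (0 : ℝ) < B.card := by exact_mod_cast hB.card_pos
  have hc : (0 : ℝ) < (A.card : ℝ) * B.card := by positivity
  have e : avgOn A u x - avgOn B u x =
      ((A.card : ℝ) * B.card)⁻¹ * ∑ i ∈ A ×ˢ B, (u (x * i.1) - u (x * i.2)) := by
    unfold avgOn
    rw [Finset.sum_sub_distrib, Finset.sum_product, Finset.sum_product]
    simp only [Finset.sum_const, nsmul_eq_mul]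
    rw [← Finset.mul_sum]
    field_simp
  rw [e, abs_mul, abs_of_pos (inv_pos.2 hc), Real.mul_rpow (by positivity) (by positivity)]
  have e2 : ∑ g ∈ A, ∑ h ∈ B, |u (x * h) - u (x * g)| ^ p =
      ∑ i ∈ A ×ˢ B, |u (x * i.1) - u (x * i.2)| ^ p := by
    rw [Finset.sum_product]
    simp only [abs_sub_comm]
  rw [e2]
  have hj := aux_abs_sum_rpow (A ×ˢ B) (fun i => u (x * i.1) - u (x * i.2)) hp
  rw [Finset.card_product, Nat.cast_mul] at hj
  calc _ ≤ (((A.card : ℝ) * B.card)⁻¹) ^ p * (((A.card : ℝ) * B.card) ^ (p - 1) *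
        ∑ i ∈ A ×ˢ B, |u (x * i.1) - u (x * i.2)| ^ p) := by gcongr
    _ = _ := by
        rw [← mul_assoc]
        congr 1
        rw [Real.inv_rpow hc.le, Real.rpow_sub_one hc.ne']
        have : ((A.card : ℝ) * B.card) ^ p ≠ 0 := by positivity
        field_simp

variable (S : Finset G)

theorem aux_avg_sum (hS_gen : Subgroup.closure (S : Set G) = ⊤)
    (hS_sym : ∀ s ∈ S, s⁻¹ ∈ S) (p : ℝ) (hp : 1 ≤ p) (u : G → ℝ) (hsum : Summable (gradP S p u))
    (A B : Finset G) (hA : A.Nonempty) (hB : B.Nonempty) (L : ℕ)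
    (hL : ∀ g ∈ A, ∀ h ∈ B, wordDist S 1 (g⁻¹ * h) ≤ L) (F : Finset G) :
    ∑ x ∈ F, |avgOn A u x - avgOn B u x| ^ p ≤ (L : ℝ) ^ p * ∑' x, gradP S p u x := by
  have ha : (0 : ℝ) < A.card := by exact_mod_cast hA.card_pos
  have hb : (0 : ℝ) < B.card := by exact_mod_cast hB.card_pos
  set E := ∑' x, gradP S p u x
  have key : ∀ g ∈ A, ∀ h ∈ B, ∑ x ∈ F, |u (x * h) - u (x * g)| ^ p ≤ (L : ℝ) ^ p * E := by
    intro g hg h hh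
    have := aux_translate S hS_gen hS_sym p hp u hsum (g⁻¹ * h) L (hL g hg h hh)
      (F.map (Equiv.mulRight g).toEmbedding)
    rw [Finset.sum_map] at this
    simpa [mul_assoc] using this
  calc _ ≤ ∑ x ∈ F, ((A.card : ℝ) * B.card)⁻¹ *
      ∑ g ∈ A, ∑ h ∈ B, |u (x * h) - u (x * g)| ^ p :=
        Finset.sum_le_sum fun x _ => aux_avg_diff A B hA hB u hp x
    _ = ((A.card : ℝ) * B.card)⁻¹ *
      ∑ g ∈ A, ∑ h ∈ B, ∑ x ∈ F, |u (x * h) - u (x * g)| ^ p := by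
        rw [← Finset.mul_sum, Finset.sum_comm]
        congr 1
        exact Finset.sum_congr rfl fun g _ => Finset.sum_comm
    _ ≤ ((A.card : ℝ) * B.card)⁻¹ * ∑ g ∈ A, ∑ h ∈ B, (L : ℝ) ^ p * E := by
        gcongr with g hg h hh
        exact key g hg h hh
    _ = _ := by
        simp only [Finset.sum_const, nsmul_eq_mul]
        field_simp

theorem aux_avg_sup (hS_gen : Subgroup.closure (S : Set G) = ⊤)
    (hS_sym : ∀ s ∈ S, s⁻¹ ∈ S) (p : ℝ) (hp : 1 ≤ p) (u : G → ℝ) (hsum : Summable (gradP S p u))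
    (A B D : Finset G) (hA : A.Nonempty) (hB : B.Nonempty) (L : ℕ)
    (hL : ∀ g ∈ A, ∀ h ∈ B, g⁻¹ * h ∈ D) (hD : ∀ z ∈ D, wordDist S 1 z ≤ L) (x : G) :
    |avgOn A u x - avgOn B u x| ^ p ≤ ((A.card : ℝ) * B.card)⁻¹ *
      (D.card * ((L : ℝ) ^ p * ∑' x, gradP S p u x)) := by
  set E := ∑' x, gradP S p u x
  refine (aux_avg_diff A B hA hB u hp x).trans ?_
  gcongr
  have key : ∀ z ∈ D, ∑ g ∈ A, |u (x * g * z) - u (x * g)| ^ p ≤ (L : ℝ) ^ p * E := by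
    intro z hz
    have := aux_translate S hS_gen hS_sym p hp u hsum z L (hD z hz)
      (A.map (Equiv.mulLeft x).toEmbedding)
    rw [Finset.sum_map] at this
    simpa using this
  calc _ ≤ ∑ g ∈ A, ∑ z ∈ D, |u (x * g * z) - u (x * g)| ^ p := by
        refine Finset.sum_le_sum fun g hg => ?_
        have : ∑ h ∈ B, |u (x * h) - u (x * g)| ^ p =
            ∑ z ∈ B.map (Equiv.mulLeft g⁻¹).toEmbedding, |u (x * g * z) - u (x * g)| ^ p := by
          rw [Finset.sum_map]
          simp [mul_assoc]
        rw [this]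
        refine Finset.sum_le_sum_of_subset_of_nonneg ?_ fun _ _ _ => by positivity
        intro z hz
        simp only [Finset.mem_map_equiv] at hz
        have := hL g hg _ hz
        simpa using this
    _ = ∑ z ∈ D, ∑ g ∈ A, |u (x * g * z) - u (x * g)| ^ p := Finset.sum_comm
    _ ≤ ∑ z ∈ D, (L : ℝ) ^ p * E := Finset.sum_le_sum key
    _ = _ := by simp

/-- Subcritical Sobolev inequality, normalised. -/
theorem aux_sobolev (hS_gen : Subgroup.closure (S : Set G) = ⊤)
    (hS_sym : ∀ s ∈ S, s⁻¹ ∈ S) (N : ℕ) (B : ℕ → Finset G)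
    (hB : ∀ n g, g ∈ B n ↔ wordDist S 1 g ≤ n)
    (C₁ C₂ : ℝ) (hC₁ : 0 < C₁) (hC₂ : 0 < C₂)
    (hgrowth : ∀ n : ℕ, 1 ≤ n →
      C₁ * (n : ℝ) ^ N ≤ ((B n).card : ℝ) ∧ ((B n).card : ℝ) ≤ C₂ * (n : ℝ) ^ N)
    (p q : ℝ) (hp : 1 ≤ p) (hpN : p < N) (hq : N * p / (N - p) < q) :
    ∃ A : ℝ, 0 < A ∧ ∀ u : G → ℝ, MemD1p S N p u → ∑' x, gradP S p u x ≤ 1 →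
      ∀ F : Finset G, ∑ x ∈ F, |u x| ^ q ≤ A := by
  have hNp : (0 : ℝ) < N - p := by linarith
  have hN0 : 0 < N := by
    have : (0 : ℝ) < N := by linarith
    exact_mod_cast this
  have hps : p ≤ N * p / (N - p) := by
    rw [le_div_iff₀ hNp]; nlinarith
  set c : ℝ := min (C₁ / 2 ^ N) 1 with hc
  have hc0 : 0 < c := by positivity
  set a : ℝ := (2 : ℝ) ^ (p - N) with ha
  set b : ℝ := (2 : ℝ) ^ p with hb
  set K : ℝ := max ((c * c)⁻¹ * (C₂ * 2 ^ N * (2 : ℝ) ^ p)) ((2 : ℝ) ^ p) with hK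
  have hK0 : 0 < K := lt_max_of_lt_right (by positivity)
  have hab : a ^ ((q - p) / p) * b < 1 := by
    rw [ha, hb, ← Real.rpow_mul (by norm_num), ← Real.rpow_add (by norm_num)]
    refine Real.rpow_lt_one_of_one_lt_of_neg (by norm_num) ?_
    rw [div_lt_iff₀ hNp] at hq
    have : (p - N) * ((q - p) / p) + p = (N * p - q * (N - p)) / p := by
      field_simp; ring
    rw [this]
    exact div_neg_of_neg_of_pos (by linarith) (by linarith)
  obtain ⟨A, hA, H⟩ := aux_telescope (X := G) p q hp (by linarith) K a b hK0 (by positivity)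
    (by positivity) hab
  refine ⟨A, hA, ?_⟩
  intro u hu hE F
  have hE0 : 0 ≤ ∑' x, gradP S p u x :=
    tsum_nonneg fun g => Finset.sum_nonneg fun s _ => by positivity
  -- radii 0, 1, 2, 4, ...
  let r : ℕ → ℕ := fun k => 2 ^ k / 2
  have hr0 : r 0 = 0 := rfl
  have hrs : ∀ k, r (k + 1) = 2 ^ k := fun k => by simp [r, pow_succ]
  have hrle : ∀ k, r k ≤ 2 ^ k := fun k => Nat.div_le_self _ _
  have hne : ∀ n, (B n).Nonempty := fun n => ⟨1, by
    rw [hB]; exact ((aux_dist_zero S hS_gen hS_sym 1).2 rfl).trans (Nat.zero_le _)⟩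
  have hlow : ∀ k, c * ((2 : ℝ) ^ k) ^ N ≤ ((B (r k)).card : ℝ) := by
    intro k
    rcases k with _ | k
    · have : (1 : ℝ) ≤ ((B (r 0)).card : ℝ) := by exact_mod_cast (hne _).card_pos
      rw [pow_zero, one_pow, mul_one]
      exact (min_le_right _ _).trans this
    · rw [hrs]
      refine le_trans ?_ (hgrowth (2 ^ k) Nat.one_le_two_pow).1
      calc c * ((2 : ℝ) ^ (k + 1)) ^ N ≤ C₁ / 2 ^ N * ((2 : ℝ) ^ (k + 1)) ^ N := by
            gcongr; exact min_le_left _ _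
        _ = _ := by
            rw [pow_succ, mul_pow]; push_cast; field_simp
  have hB0 : B (r 0) = {1} := by
    ext g
    rw [hB, hr0, aux_dist_zero S hS_gen hS_sym, Finset.mem_singleton]
  have hL : ∀ k, ∀ g ∈ B (r k), ∀ h ∈ B (r (k + 1)), wordDist S 1 (g⁻¹ * h) ≤ 2 * 2 ^ k := by
    intro k g hg h hh
    have h1 := (hB _ _).1 hg
    have h2 := (hB _ _).1 hh
    have h3 := hrle k
    rw [hrs] at h2
    have := aux_dist_inv_mul S hS_gen hS_sym g h
    omega
  have hfin := H (fun k => avgOn (B (r k)) u) ?_ ?_ ?_ F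
  · have e : ∀ x, avgOn (B (r 0)) u x = u x := by
      intro x
      rw [hB0]; simp [avgOn]
    simpa only [e] using hfin
  · -- convergence to 0
    intro x
    set m : ℝ := N * p / (N - p) with hm
    have hm1 : 1 ≤ m := hp.trans hps
    have hsm : Summable fun x => |u x| ^ m := hu.1
    set M := ∑' x, |u x| ^ m with hM
    have hM0 : 0 ≤ M := tsum_nonneg fun x => by positivity
    have hbd : ∀ k, |avgOn (B (r k)) u x| ^ m ≤ (c * 2 ^ k)⁻¹ * M := by
      intro k
      refine (aux_avg_rpow _ (hne _) u hm1 x).trans ?_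
      have h1 : ∑ g ∈ B (r k), |u (x * g)| ^ m ≤ M := by
        have : ∑ g ∈ B (r k), |u (x * g)| ^ m =
            ∑ g ∈ (B (r k)).map (Equiv.mulLeft x).toEmbedding, |u g| ^ m := by
          rw [Finset.sum_map]; rfl
        rw [this]
        exact hsm.sum_le_tsum _ fun i _ => by positivity
      have h2 : c * 2 ^ k ≤ ((B (r k)).card : ℝ) := by
        refine le_trans ?_ (hlow k)
        gcongr
        exact le_self_pow₀ (one_le_pow₀ (by norm_num)) hN0.ne'
      gcongr
    have hlim : Tendsto (fun k : ℕ => (c * 2 ^ k)⁻¹ * M) atTop (𝓝 0) := by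
      have h1 : Tendsto (fun k : ℕ => c * (2 : ℝ) ^ k) atTop atTop :=
        (tendsto_pow_atTop_atTop_of_one_lt (by norm_num)).const_mul_atTop hc0
      simpa using h1.inv_tendsto_atTop.mul_const M
    have h3 : Tendsto (fun k => |avgOn (B (r k)) u x| ^ m) atTop (𝓝 0) :=
      squeeze_zero (fun k => by positivity) hbd hlim
    have h4 := h3.rpow_const (p := 1 / m) (Or.inr (by positivity))
    rw [Real.zero_rpow (by positivity)] at h4
    have h5 : Tendsto (fun k => |avgOn (B (r k)) u x|) atTop (𝓝 0) := by
      refine h4.congr fun k => ?_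
      rw [← Real.rpow_mul (abs_nonneg _), mul_one_div_cancel (by positivity), Real.rpow_one]
    exact (tendsto_zero_iff_abs_tendsto_zero _).2 h5
  · intro k x
    have h := aux_avg_sup S hS_gen hS_sym p hp u hu.2 (B (r k)) (B (r (k + 1))) (B (2 * 2 ^ k))
      (hne _) (hne _) (2 * 2 ^ k) (fun g hg h hh => (hB _ _).2 (hL k g hg h hh))
      (fun z hz => (hB _ _).1 hz) x
    refine h.trans ?_
    have hk1 := hlow k
    have hk2 : c * ((2 : ℝ) ^ k) ^ N ≤ ((B (r (k + 1))).card : ℝ) := by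
      refine le_trans ?_ (hlow (k + 1))
      gcongr
      · norm_num
      · omega
    have hk3 := (hgrowth (2 * 2 ^ k) (by have := Nat.one_le_two_pow (n := k); omega)).2
    push_cast at hk3 ⊢
    calc _ ≤ ((c * ((2 : ℝ) ^ k) ^ N) * (c * ((2 : ℝ) ^ k) ^ N))⁻¹ *
          ((C₂ * (2 * 2 ^ k) ^ N) * ((2 * (2 : ℝ) ^ k) ^ p * 1)) := by
          gcongr
      _ = ((c * c)⁻¹ * (C₂ * 2 ^ N * (2 : ℝ) ^ p)) * a ^ k := by
          have e1 : a ^ k = ((2 : ℝ) ^ k) ^ p / ((2 : ℝ) ^ k) ^ N := by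
            rw [ha, ← Real.rpow_natCast, ← Real.rpow_natCast, ← Real.rpow_natCast,
              ← Real.rpow_mul (by norm_num), ← Real.rpow_mul (by norm_num),
              ← Real.rpow_mul (by norm_num), ← Real.rpow_sub (by norm_num)]
            congr 1; ring
          rw [e1, Real.mul_rpow (by norm_num) (by positivity), mul_pow]
          field_simp
      _ ≤ K * a ^ k := by gcongr; exact le_max_left _ _
  · intro k F
    have h := aux_avg_sum S hS_gen hS_sym p hp u hu.2 (B (r k)) (B (r (k + 1)))
      (hne _) (hne _) (2 * 2 ^ k) (hL k) F
    refine h.trans ?_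
    push_cast
    calc _ ≤ (2 * (2 : ℝ) ^ k) ^ p * 1 := by gcongr
      _ = (2 : ℝ) ^ p * b ^ k := by
          rw [Real.mul_rpow (by norm_num) (by positivity), mul_one, hb, ← Real.rpow_natCast,
            ← Real.rpow_natCast, ← Real.rpow_mul (by norm_num), ← Real.rpow_mul (by norm_num),
            mul_comm (k : ℝ) p]
      _ ≤ K * b ^ k := by gcongr; exact le_max_right _ _

/-- Summability of the kernel. -/
theorem aux_kernel (N : ℕ) (B : ℕ → Finset G)
    (hB : ∀ n g, g ∈ B n ↔ wordDist S 1 g ≤ n)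
    (C₂ : ℝ) (hC₂ : 0 < C₂)
    (hgrowth : ∀ n : ℕ, 1 ≤ n → ((B n).card : ℝ) ≤ C₂ * (n : ℝ) ^ N)
    (γ : ℝ) (hγ : N < γ) :
    ∃ κ : ℝ, 0 < κ ∧ ∀ F : Finset G,
      ∑ z ∈ F, (max (wordDist S 1 z : ℝ) 1) ^ (-γ) ≤ κ := by
  have hγ0 : 0 < γ := lt_of_le_of_lt (Nat.cast_nonneg N) hγ
  set τ : ℝ := (2 : ℝ) ^ (N - γ) with hτ
  have hτ0 : 0 < τ := by positivity
  have hτ1 : τ < 1 := Real.rpow_lt_one_of_one_lt_of_neg (by norm_num) (by linarith)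
  have hτ2 : 0 < 1 - τ := by linarith
  refine ⟨2 ^ γ * (C₂ * (1 - τ)⁻¹), by positivity, ?_⟩
  intro F
  classical
  have hpt : ∀ z, ∃ k : ℕ, wordDist S 1 z ≤ 2 ^ k ∧
      (max (wordDist S 1 z : ℝ) 1) ^ (-γ) ≤ 2 ^ γ * ((2 : ℝ) ^ k) ^ (-γ) := by
    intro z
    set d := wordDist S 1 z
    refine ⟨Nat.clog 2 d, Nat.le_pow_clog (by norm_num) d, ?_⟩
    have h1 : (2 : ℝ) ^ (Nat.clog 2 d) ≤ 2 * max (d : ℝ) 1 := by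
      rcases Nat.lt_or_ge 1 d with h | h
      · have h2 := Nat.pow_pred_clog_lt_self (b := 2) (by norm_num) h
        have h3 : 0 < Nat.clog 2 d := Nat.clog_pos (by norm_num) h
        have h4 : 2 ^ Nat.clog 2 d ≤ 2 * d := by
          obtain ⟨j, hj⟩ := Nat.exists_eq_succ_of_ne_zero h3.ne'
          rw [hj] at h2 ⊢
          simp only [Nat.succ_eq_add_one, Nat.pred_eq_sub_one, Nat.add_sub_cancel] at h2
          rw [Nat.succ_eq_add_one, pow_succ]; omega
        have h5 : (2 : ℝ) ^ Nat.clog 2 d ≤ 2 * d := by exact_mod_cast h4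
        exact h5.trans (by gcongr; exact le_max_left _ _)
      · rw [Nat.clog_of_right_le_one h]
        have := le_max_right (d : ℝ) 1
        simp only [pow_zero]; linarith
    have hm : (0 : ℝ) < max (d : ℝ) 1 := lt_max_of_lt_right one_pos
    have h6 := Real.rpow_le_rpow_of_nonpos (by positivity) h1 (neg_nonpos.2 hγ0.le)
    rw [Real.mul_rpow (by norm_num) hm.le] at h6
    calc _ = 2 ^ γ * ((2 : ℝ) ^ (-γ) * (max (d : ℝ) 1) ^ (-γ)) := by
          rw [← mul_assoc, ← Real.rpow_add (by norm_num)]; simp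
      _ ≤ _ := by gcongr
  choose k hk1 hk2 using hpt
  set n := F.sup k + 1 with hn
  calc _ ≤ ∑ z ∈ F, ∑ j ∈ Finset.range n,
        if z ∈ B (2 ^ j) then 2 ^ γ * ((2 : ℝ) ^ j) ^ (-γ) else 0 := by
        refine Finset.sum_le_sum fun z hz => ?_
        have hmem : k z ∈ Finset.range n := by
          rw [Finset.mem_range, hn]; exact Nat.lt_succ_of_le (Finset.le_sup hz)
        refine le_trans ?_ (Finset.single_le_sum (f := fun j =>
          if z ∈ B (2 ^ j) then 2 ^ γ * ((2 : ℝ) ^ j) ^ (-γ) else 0)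
          (fun j _ => by positivity) hmem)
        simp only [hB, hk1 z, if_true]
        exact hk2 z
    _ = ∑ j ∈ Finset.range n, ∑ z ∈ F,
        if z ∈ B (2 ^ j) then 2 ^ γ * ((2 : ℝ) ^ j) ^ (-γ) else 0 := Finset.sum_comm
    _ ≤ ∑ j ∈ Finset.range n, 2 ^ γ * (C₂ * τ ^ j) := by
        refine Finset.sum_le_sum fun j _ => ?_
        rw [← Finset.sum_filter, Finset.sum_const, nsmul_eq_mul]
        have h1 : ((F.filter fun z => z ∈ B (2 ^ j)).card : ℝ) ≤ C₂ * ((2 : ℝ) ^ j) ^ N := by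
          have h2 := hgrowth (2 ^ j) Nat.one_le_two_pow
          push_cast at h2
          refine le_trans ?_ h2
          exact_mod_cast Finset.card_le_card (fun z hz => (Finset.mem_filter.1 hz).2)
        have e1 : τ ^ j = ((2 : ℝ) ^ j) ^ N * ((2 : ℝ) ^ j) ^ (-γ) := by
          rw [hτ, ← Real.rpow_natCast, ← Real.rpow_natCast, ← Real.rpow_natCast,
              ← Real.rpow_mul (by norm_num), ← Real.rpow_mul (by norm_num),
              ← Real.rpow_mul (by norm_num), ← Real.rpow_add (by norm_num)]
          congr 1; ring
        calc _ ≤ C₂ * ((2 : ℝ) ^ j) ^ N * (2 ^ γ * ((2 : ℝ) ^ j) ^ (-γ)) := by gcongr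
          _ = _ := by rw [e1]; ring
    _ = 2 ^ γ * (C₂ * ∑ j ∈ Finset.range n, τ ^ j) := by
        rw [← Finset.mul_sum, ← Finset.mul_sum]
    _ ≤ _ := by gcongr; exact aux_geom τ hτ0.le hτ1 n

end averages

section final

variable [Group G] (S : Finset G)

theorem aux_young {X Y ω t : ℝ} (hX : 0 ≤ X) (hY : 0 ≤ Y) (hω : 0 ≤ ω) (ht : 1 / 2 < t)
    (ht1 : t < 1) : X ^ t * Y ^ t * ω ^ (2 - 2 * t) ≤ X * Y + X * ω + Y * ω := by
  have h := Real.geom_mean_le_arith_mean3_weighted (w₁ := 2 * t - 1) (w₂ := 1 - t) (w₃ := 1 - t)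
    (p₁ := X * Y) (p₂ := X * ω) (p₃ := Y * ω) (by linarith) (by linarith) (by linarith)
    (by positivity) (by positivity) (by positivity) (by ring)
  have key : ∀ Z : ℝ, 0 ≤ Z → Z ^ t = Z ^ (2 * t - 1) * Z ^ (1 - t) := by
    intro Z hZ
    rw [← Real.rpow_add_of_nonneg hZ (by linarith) (by linarith)]
    congr 1; ring
  have e : X ^ t * Y ^ t * ω ^ (2 - 2 * t) =
      (X * Y) ^ (2 * t - 1) * (X * ω) ^ (1 - t) * (Y * ω) ^ (1 - t) := by
    rw [Real.mul_rpow hX hY, Real.mul_rpow hX hω, Real.mul_rpow hY hω, key X hX, key Y hY,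
      show 2 - 2 * t = (1 - t) + (1 - t) by ring,
      Real.rpow_add_of_nonneg hω (by linarith) (by linarith)]
    ring
  rw [e]
  refine h.trans ?_
  have h1 : 0 ≤ X * Y := by positivity
  have h2 : 0 ≤ X * ω := by positivity
  have h3 : 0 ≤ Y * ω := by positivity
  nlinarith

theorem aux_final (hS_gen : Subgroup.closure (S : Set G) = ⊤)
    (hS_sym : ∀ s ∈ S, s⁻¹ ∈ S) (N : ℕ) (hN : (3 : ℝ) ≤ N) (B : ℕ → Finset G)
    (hB : ∀ n g, g ∈ B n ↔ wordDist S 1 g ≤ n)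
    (C₁ C₂ : ℝ) (hC₁ : 0 < C₁) (hC₂ : 0 < C₂)
    (hgrowth : ∀ n : ℕ, 1 ≤ n →
      C₁ * (n : ℝ) ^ N ≤ ((B n).card : ℝ) ∧ ((B n).card : ℝ) ≤ C₂ * (n : ℝ) ^ N)
    (α : ℝ) (hα : 0 < α)
    (Rα : G → G → ℝ) (hR_nonneg : ∀ x y, 0 ≤ Rα x y)
    (c₂ : ℝ) (hc₂ : 0 < c₂)
    (hR_up : ∀ x y : G, x ≠ y → Rα x y ≤ c₂ * (wordDist S x y : ℝ) ^ (α - (N : ℝ)))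
    (hR_diag : ∀ x : G, Rα x x ≤ c₂)
    (p : ℝ) (hp1 : 1 ≤ p) (hp2 : p < ((N : ℝ) - α) / 2) :
    ∃ C : ℝ, 0 < C ∧ ∀ u : G → ℝ, MemD1p S N p u →
      (∑' x, conv Rα (fun y => |u y| ^ p) x * |u x| ^ p) ≤
        C * (∑' x, gradP S p u x) ^ 2 := by
  have hN0 : (0 : ℝ) < N := by linarith
  obtain ⟨t, ht1, ht2⟩ : ∃ t : ℝ, ((N : ℝ) + α) / (2 * N) < t ∧ t < ((N : ℝ) - p) / N := by
    refine exists_between ?_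
    rw [div_lt_div_iff₀ (by positivity) hN0]
    nlinarith
  rw [div_lt_iff₀ (by positivity)] at ht1
  rw [lt_div_iff₀ hN0] at ht2
  have hth : 1 / 2 < t := by nlinarith
  have ht1' : t < 1 := by nlinarith
  have ht0 : 0 < t := by linarith
  set q : ℝ := p / t with hq
  have hqt : q * t = p := by rw [hq]; field_simp
  set γ : ℝ := (N - α) / (2 - 2 * t) with hγ
  have h2t : 0 < 2 - 2 * t := by linarith
  have hγt : -γ * (2 - 2 * t) = α - N := by
    rw [hγ, neg_mul, div_mul_cancel₀ _ h2t.ne']; ring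
  have hγN : (N : ℝ) < γ := by
    rw [hγ, lt_div_iff₀ h2t]; nlinarith
  have hpN : p < N := by linarith
  obtain ⟨A, hA, hsob⟩ := aux_sobolev S hS_gen hS_sym N B hB C₁ C₂ hC₁ hC₂ hgrowth p q hp1 hpN (by
    rw [hq, div_lt_div_iff₀ (by linarith) ht0]; nlinarith)
  obtain ⟨κ, hκ, hker⟩ := aux_kernel S N B hB C₂ hC₂ (fun n hn => (hgrowth n hn).2) γ hγN
  set C : ℝ := c₂ * (A * A + A * κ + A * κ) with hC
  have hC0 : 0 < C := by positivity
  let ω : G → ℝ := fun z => (max (wordDist S 1 z : ℝ) 1) ^ (-γ)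
  have hω : ∀ z, 0 ≤ ω z := fun z => by positivity
  have hRω : ∀ x y, Rα x y ≤ c₂ * ω (x⁻¹ * y) ^ (2 - 2 * t) := by
    intro x y
    have hm : (0 : ℝ) < max (wordDist S 1 (x⁻¹ * y) : ℝ) 1 := lt_max_of_lt_right one_pos
    have e : ω (x⁻¹ * y) ^ (2 - 2 * t) = (max (wordDist S 1 (x⁻¹ * y) : ℝ) 1) ^ (α - N) := by
      simp only [ω]
      rw [← Real.rpow_mul hm.le, hγt]
    rw [e]
    by_cases hxy : x = y
    · subst hxy
      have : wordDist S 1 (x⁻¹ * x) = 0 := by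
        rw [inv_mul_cancel]
        exact Nat.le_zero.1 ((aux_dist_zero S hS_gen hS_sym 1).2 rfl)
      rw [this]
      simpa using hR_diag x
    · refine (hR_up x y hxy).trans ?_
      rw [aux_dist_left]
      have hd : 1 ≤ wordDist S 1 (x⁻¹ * y) := by
        by_contra hcon
        have := (aux_dist_zero S hS_gen hS_sym (x⁻¹ * y)).1 (by omega)
        exact hxy (inv_mul_eq_one.1 this)
      rw [max_eq_left (by exact_mod_cast hd)]
  have hmain : ∀ u : G → ℝ, MemD1p S N p u → ∑' x, gradP S p u x ≤ 1 →
      (∑' x, conv Rα (fun y => |u y| ^ p) x * |u x| ^ p) ≤ C := by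
    intro u hu hE
    have hs := hsob u hu hE
    let X : G → ℝ := fun x => |u x| ^ q
    have hX : ∀ x, 0 ≤ X x := fun x => by positivity
    have hXp : ∀ x, |u x| ^ p = X x ^ t := by
      intro x
      simp only [X]
      rw [← Real.rpow_mul (abs_nonneg _), hqt]
    let f : G × G → ℝ := fun i => Rα i.1 i.2 * |u i.2| ^ p * |u i.1| ^ p
    have hf0 : ∀ i, 0 ≤ f i := fun i => by
      have := hR_nonneg i.1 i.2
      positivity
    have hfle : ∀ i, f i ≤ c₂ * (X i.1 * X i.2 + X i.1 * ω (i.1⁻¹ * i.2) +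
        X i.2 * ω (i.1⁻¹ * i.2)) := by
      rintro ⟨x, y⟩
      have hy := aux_young (hX x) (hX y) (hω (x⁻¹ * y)) hth ht1'
      have hx1 : 0 ≤ X x ^ t := Real.rpow_nonneg (hX x) _
      have hy1 : 0 ≤ X y ^ t := Real.rpow_nonneg (hX y) _
      simp only [f, hXp]
      calc _ ≤ c₂ * ω (x⁻¹ * y) ^ (2 - 2 * t) * X y ^ t * X x ^ t := by
            gcongr; exact hRω x y
        _ = c₂ * (X x ^ t * X y ^ t * ω (x⁻¹ * y) ^ (2 - 2 * t)) := by ring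
        _ ≤ _ := by gcongr
    have hsum : ∀ P : Finset (G × G), ∑ i ∈ P, f i ≤ C := by
      intro P
      classical
      let F := P.image Prod.fst ∪ P.image Prod.snd
      have hPF : P ⊆ F ×ˢ F := by
        intro i hi
        refine Finset.mem_product.2 ⟨?_, ?_⟩
        · exact Finset.mem_union_left _ (Finset.mem_image_of_mem _ hi)
        · exact Finset.mem_union_right _ (Finset.mem_image_of_mem _ hi)
      have hk1 : ∀ x, ∑ y ∈ F, ω (x⁻¹ * y) ≤ κ := by
        intro x
        have := hker (F.map (Equiv.mulLeft x⁻¹).toEmbedding)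
        rw [Finset.sum_map] at this
        exact this
      have hk2 : ∀ y, ∑ x ∈ F, ω (x⁻¹ * y) ≤ κ := by
        intro y
        have := hker (F.map ((Equiv.inv G).trans (Equiv.mulRight y)).toEmbedding)
        rw [Finset.sum_map] at this
        exact this
      have hXF : ∑ x ∈ F, X x ≤ A := hs F
      have hXF0 : 0 ≤ ∑ x ∈ F, X x := Finset.sum_nonneg fun x _ => hX x
      have b1 : ∑ x ∈ F, ∑ y ∈ F, X x * X y ≤ A * A := by
        rw [← Finset.sum_mul_sum]
        gcongr
      have b2 : ∑ x ∈ F, ∑ y ∈ F, X x * ω (x⁻¹ * y) ≤ A * κ := by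
        calc _ = ∑ x ∈ F, X x * ∑ y ∈ F, ω (x⁻¹ * y) := by simp only [Finset.mul_sum]
          _ ≤ ∑ x ∈ F, X x * κ :=
            Finset.sum_le_sum fun x _ => mul_le_mul_of_nonneg_left (hk1 x) (hX x)
          _ = (∑ x ∈ F, X x) * κ := by rw [Finset.sum_mul]
          _ ≤ _ := by gcongr
      have b3 : ∑ x ∈ F, ∑ y ∈ F, X y * ω (x⁻¹ * y) ≤ A * κ := by
        rw [Finset.sum_comm]
        calc _ = ∑ y ∈ F, X y * ∑ x ∈ F, ω (x⁻¹ * y) := by simp only [Finset.mul_sum]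
          _ ≤ ∑ x ∈ F, X x * κ :=
            Finset.sum_le_sum fun x _ => mul_le_mul_of_nonneg_left (hk2 x) (hX x)
          _ = (∑ x ∈ F, X x) * κ := by rw [Finset.sum_mul]
          _ ≤ _ := by gcongr
      calc _ ≤ ∑ i ∈ F ×ˢ F, f i :=
            Finset.sum_le_sum_of_subset_of_nonneg hPF fun i _ _ => hf0 i
        _ ≤ ∑ i ∈ F ×ˢ F, c₂ * (X i.1 * X i.2 + X i.1 * ω (i.1⁻¹ * i.2) +
            X i.2 * ω (i.1⁻¹ * i.2)) := Finset.sum_le_sum fun i _ => hfle i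
        _ = c₂ * (∑ x ∈ F, ∑ y ∈ F, X x * X y + ∑ x ∈ F, ∑ y ∈ F, X x * ω (x⁻¹ * y) +
            ∑ x ∈ F, ∑ y ∈ F, X y * ω (x⁻¹ * y)) := by
            rw [← Finset.mul_sum, Finset.sum_product]
            simp only [Finset.sum_add_distrib]
        _ ≤ C := by rw [hC]; gcongr
    have hfs : Summable f := summable_of_sum_le hf0 hsum
    have hft : ∑' i, f i ≤ C := Real.tsum_le_of_sum_le hf0 hsum
    rw [hfs.tsum_prod] at hft
    refine le_trans (le_of_eq ?_) hft
    refine tsum_congr fun x => ?_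
    simp only [conv, f]
    rw [tsum_mul_right]
  refine ⟨C, hC0, ?_⟩
  intro u hu
  set E := ∑' x, gradP S p u x with hE
  have hE0 : 0 ≤ E := tsum_nonneg fun g => Finset.sum_nonneg fun s _ => by positivity
  have hscale : ∀ a : ℝ, E < a →
      (∑' x, conv Rα (fun y => |u y| ^ p) x * |u x| ^ p) ≤ C * a ^ 2 := by
    intro a ha
    have ha0 : 0 < a := lt_of_le_of_lt hE0 ha
    set b : ℝ := a ^ (-(1 / p)) with hb
    have hb0 : 0 < b := by positivity
    have hbp : b ^ p = a⁻¹ := by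
      rw [hb, ← Real.rpow_mul ha0.le, show -(1 / p) * p = -1 by field_simp, Real.rpow_neg_one]
    have habs : ∀ (r w : ℝ), |b * w| ^ r = b ^ r * |w| ^ r := by
      intro r w
      rw [abs_mul, abs_of_pos hb0, Real.mul_rpow hb0.le (abs_nonneg _)]
    have hgr : ∀ x, gradP S p (fun x => b * u x) x = a⁻¹ * gradP S p u x := by
      intro x
      simp only [gradP, ← mul_sub, habs, hbp, Finset.mul_sum]
    have h := hmain (fun x => b * u x) ⟨?_, ?_⟩ ?_
    · simp only [habs, hbp, conv] at h
      have e : ∀ x, (∑' y, Rα x y * (a⁻¹ * |u y| ^ p)) * (a⁻¹ * |u x| ^ p)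
          = (a ^ 2)⁻¹ * ((∑' y, Rα x y * |u y| ^ p) * |u x| ^ p) := by
        intro x
        have : ∀ y, Rα x y * (a⁻¹ * |u y| ^ p) = a⁻¹ * (Rα x y * |u y| ^ p) := fun y => by ring
        simp only [this]
        rw [tsum_mul_left]
        field_simp
      simp only [e] at h
      rw [tsum_mul_left, inv_mul_le_iff₀ (by positivity)] at h
      rw [mul_comm]
      exact h
    · have := hu.1
      unfold Memlp at this ⊢
      simp only [habs]
      exact this.mul_left _
    · have := hu.2.mul_left a⁻¹
      exact this.congr fun x => (hgr x).symm
    · simp only [hgr]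
      rw [tsum_mul_left, inv_mul_le_iff₀ ha0]
      linarith
  have hlim : Tendsto (fun a : ℝ => C * a ^ 2) (𝓝[>] E) (𝓝 (C * E ^ 2)) :=
    ((by fun_prop : Continuous fun a : ℝ => C * a ^ 2).tendsto E).mono_left nhdsWithin_le_nhds
  refine ge_of_tendsto hlim ?_
  filter_upwards [self_mem_nhdsWithin] with a ha
  exact hscale a ha

end final

theorem sobolev_type_inequality_pLaplace
    [Group G] [Countable G]
    (S : Finset G) (hS_gen : Subgroup.closure (S : Set G) = ⊤)
    (hS_sym : ∀ s ∈ S, s⁻¹ ∈ S) (hS_e : (1 : G) ∉ S)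
    (N : ℕ) (hN : 3 ≤ N)
    (C₁ C₂ : ℝ) (hC₁ : 0 < C₁) (hC₂ : 0 < C₂)
    (hgrowth : ∀ n : ℕ, 1 ≤ n →
      C₁ * (n : ℝ) ^ N ≤ (Nat.card {x : G // wordDist S 1 x ≤ n} : ℝ) ∧
      (Nat.card {x : G // wordDist S 1 x ≤ n} : ℝ) ≤ C₂ * (n : ℝ) ^ N)
    (α : ℝ) (hα : 0 < α) (hαN : α < (N : ℝ) - 2)
    (Rα : G → G → ℝ) (hR_nonneg : ∀ x y, 0 ≤ Rα x y)
    (hR_symm : ∀ x y, Rα x y = Rα y x)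
    (c₁ c₂ : ℝ) (hc₁ : 0 < c₁) (hc₂ : 0 < c₂)
    (hR_low : ∀ x y : G, x ≠ y → c₁ * (wordDist S x y : ℝ) ^ (α - (N : ℝ)) ≤ Rα x y)
    (hR_up : ∀ x y : G, x ≠ y → Rα x y ≤ c₂ * (wordDist S x y : ℝ) ^ (α - (N : ℝ)))
    (hR_diag : ∀ x : G, Rα x x ≤ c₂)
    (p : ℝ) (hp1 : 1 ≤ p) (hp2 : p < ((N : ℝ) - α) / 2) :
    ∃ C : ℝ, 0 < C ∧ ∀ u : G → ℝ, MemD1p S N p u →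
      (∑' x, conv Rα (fun y => |u y| ^ p) x * |u x| ^ p) ≤
        C * (∑' x, gradP S p u x) ^ 2 := by
  have hN3 : (3 : ℝ) ≤ N := by exact_mod_cast hN
  have hfinite : ∀ n, {x : G | wordDist S 1 x ≤ n}.Finite := by
    have h1 : ∀ n, 1 ≤ n → {x : G | wordDist S 1 x ≤ n}.Finite := by
      intro n hn
      have h := (hgrowth n hn).1
      have hn0 : (0 : ℝ) < n := by exact_mod_cast hn
      have hpos : (0 : ℝ) < (Nat.card {x : G // wordDist S 1 x ≤ n} : ℝ) :=
        lt_of_lt_of_le (by positivity) h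
      have hpos' : 0 < Nat.card {x : G // wordDist S 1 x ≤ n} := by exact_mod_cast hpos
      have hf : Finite {x : G // wordDist S 1 x ≤ n} := (Nat.card_pos_iff.1 hpos').2
      exact Set.finite_coe_iff.1 hf
    intro n
    exact (h1 (n + 1) (by omega)).subset fun x hx => Nat.le_succ_of_le hx
  let B : ℕ → Finset G := fun n => (hfinite n).toFinset
  have hB : ∀ n g, g ∈ B n ↔ wordDist S 1 g ≤ n := fun n g => by simp [B]
  have hcard : ∀ n, Nat.card {x : G // wordDist S 1 x ≤ n} = (B n).card := by
    intro n
    exact Nat.subtype_card (B n) (fun x => hB n x)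
  simp only [hcard] at hgrowth
  exact aux_final S hS_gen hS_sym N hN3 B hB C₁ C₂ hC₁ hC₂ hgrowth α hα Rα hR_nonneg c₂ hc₂
    hR_up hR_diag p hp1 hp2

end Choquard
end
end
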